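/- arXiv:1501.00423 — 2 statements merged into one kernel-verified Lean document; each statement's English description precedes it below -/
import Mathlib

section
/- Let Ω ⊂ ℝⁿ be a bounded connected open set (no boundary regularity assumed) and d(x) := dist(x, ∂Ω) for x ∈ Ω. Assume b and σ are Lipschitz continuous in x uniformly in α with constant B (i.e. (reg22) with ω(r) = Br and (reg2) with β = 1); assume that every x̄ ∈ ∂Ω has an open neighborhood U and k > 0 such that conditions (d_subsol) and (sigma_perp) hold for EVERY α ∈ A; and assume F satisfies the Strong Minimum Principle in Ω. If v : Ω → ℝ is lower semicontinuous, is a viscosity supersolution of F[v]=0 in Ω, and satisfies liminf_{x→∂Ω} v(x)/(−log d(x)) ≥ 0, then v is constant. -/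
open scoped InnerProductSpace Matrix
open Filter

noncomputable section

/-- The signed distance to the boundary of `Ω`:
`d(x) = dist(x, Ωᶜ) - dist(x, closure Ω)`. -/
def sdist {n : ℕ} (Ω : Set (EuclideanSpace ℝ (Fin n))) (x : EuclideanSpace ℝ (Fin n)) : ℝ :=
  Metric.infDist x Ωᶜ - Metric.infDist x (closure Ω)

/-- The distance to the topological boundary of `Ω`. -/
def bdist {n : ℕ} (Ω : Set (EuclideanSpace ℝ (Fin n))) (x : EuclideanSpace ℝ (Fin n)) : ℝ :=
  Metric.infDist x (frontier Ω)

/-- The Frobenius (Euclidean) norm of a matrix. -/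
def mnorm {n r : ℕ} (M : Matrix (Fin n) (Fin r) ℝ) : ℝ :=
  Real.sqrt (∑ i, ∑ j, M i j ^ 2)

/-- The quadratic form `v ↦ v ⬝ X v`. -/
def quadForm {n : ℕ} (X : Matrix (Fin n) (Fin n) ℝ) (v : EuclideanSpace ℝ (Fin n)) : ℝ :=
  ∑ i, ∑ j, X i j * v i * v j

/-- `Mᵀ v` as a vector in `ℝʳ` (used for `σ(x,α)ᵀ Dd(x)`). -/
def sigmaT {n r : ℕ} (M : Matrix (Fin n) (Fin r) ℝ) (v : EuclideanSpace ℝ (Fin n)) :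
    Fin r → ℝ :=
  Matrix.mulVec Mᵀ (fun i => v i)

/-- The second-order superjet of `u` at `x` relative to `S`. -/
def J2plus {n : ℕ} (S : Set (EuclideanSpace ℝ (Fin n))) (u : EuclideanSpace ℝ (Fin n) → ℝ)
    (x : EuclideanSpace ℝ (Fin n)) :
    Set (EuclideanSpace ℝ (Fin n) × Matrix (Fin n) (Fin n) ℝ) :=
  { pX | pX.2.IsSymm ∧ ∀ ε > (0 : ℝ), ∀ᶠ y in nhdsWithin x S,
      u y - u x - ⟪pX.1, y - x⟫_ℝ - (1 / 2) * quadForm pX.2 (y - x) ≤ ε * ‖y - x‖ ^ 2 }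

/-- The second-order subjet of `u` at `x` relative to `S`: `J^{2,-}u = -J^{2,+}(-u)`. -/
def J2minus {n : ℕ} (S : Set (EuclideanSpace ℝ (Fin n))) (u : EuclideanSpace ℝ (Fin n) → ℝ)
    (x : EuclideanSpace ℝ (Fin n)) :
    Set (EuclideanSpace ℝ (Fin n) × Matrix (Fin n) (Fin n) ℝ) :=
  { qZ | (-qZ.1, -qZ.2) ∈ J2plus S (fun y => -u y) x }

/-- The first-order superdifferential of `u` at `x` relative to `S`. -/
def D1plus {n : ℕ} (S : Set (EuclideanSpace ℝ (Fin n))) (u : EuclideanSpace ℝ (Fin n) → ℝ)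
    (x : EuclideanSpace ℝ (Fin n)) : Set (EuclideanSpace ℝ (Fin n)) :=
  { q | ∀ ε > (0 : ℝ), ∀ᶠ y in nhdsWithin x S, u y - u x - ⟪q, y - x⟫_ℝ ≤ ε * ‖y - x‖ }

/-- The Bellman operator `F(x,p,X) = sup_{α ∈ A} (-b(x,α)·p - tr(σσᵀ X))`. -/
def Fop {n m r : ℕ} (A : Set (Fin m → ℝ))
    (b : EuclideanSpace ℝ (Fin n) → (Fin m → ℝ) → EuclideanSpace ℝ (Fin n))
    (σ : EuclideanSpace ℝ (Fin n) → (Fin m → ℝ) → Matrix (Fin n) (Fin r) ℝ)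
    (x p : EuclideanSpace ℝ (Fin n)) (X : Matrix (Fin n) (Fin n) ℝ) : ℝ :=
  sSup ((fun α => -⟪b x α, p⟫_ℝ - Matrix.trace (σ x α * (σ x α)ᵀ * X)) '' A)

/-- The Hamiltonian `H(x,p,X) = sup_{α ∈ A} (-b(x,α)·p - tr(σσᵀ X) - l(x,α))`. -/
def Hop {n m r : ℕ} (A : Set (Fin m → ℝ))
    (b : EuclideanSpace ℝ (Fin n) → (Fin m → ℝ) → EuclideanSpace ℝ (Fin n))
    (σ : EuclideanSpace ℝ (Fin n) → (Fin m → ℝ) → Matrix (Fin n) (Fin r) ℝ)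
    (l : EuclideanSpace ℝ (Fin n) → (Fin m → ℝ) → ℝ)
    (x p : EuclideanSpace ℝ (Fin n)) (X : Matrix (Fin n) (Fin n) ℝ) : ℝ :=
  sSup ((fun α => -⟪b x α, p⟫_ℝ - Matrix.trace (σ x α * (σ x α)ᵀ * X) - l x α) '' A)

/-- The set of projections of `x` onto `∂Ω`. -/
def projSet {n : ℕ} (Ω : Set (EuclideanSpace ℝ (Fin n))) (x : EuclideanSpace ℝ (Fin n)) :
    Set (EuclideanSpace ℝ (Fin n)) :=
  { z | z ∈ frontier Ω ∧ dist x z = bdist Ω x }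

/-- The interior normal directions at a boundary point `z`. -/
def normalDirs {n : ℕ} (Ω : Set (EuclideanSpace ℝ (Fin n))) (z : EuclideanSpace ℝ (Fin n)) :
    Set (EuclideanSpace ℝ (Fin n)) :=
  { ν | ‖ν‖ = 1 ∧ ∃ x ∈ Ω, x = z + bdist Ω x • ν }

section Analysis

/-- `u` is touched from above at each point by a paraboloid of opening `C`, slope at most `L`. -/
def ParaAbove {E : Type*} [NormedAddCommGroup E] [InnerProductSpace ℝ E]
    (u : E → ℝ) (L C : ℝ) : Prop :=
  ∀ w, ∃ a : E, ‖a‖ ≤ L ∧ ∀ y, u y ≤ u w + ⟪a, y - w⟫_ℝ + C / 2 * ‖y - w‖ ^ 2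

theorem ParaAbove.bound {E : Type*} [NormedAddCommGroup E] [InnerProductSpace ℝ E]
    {u : E → ℝ} {L C : ℝ} (h : ParaAbove u L C) (w y : E) :
    u y ≤ u w + L * ‖y - w‖ + C / 2 * ‖y - w‖ ^ 2 := by
  obtain ⟨a, ha, h⟩ := h w
  have h1 := h y
  have h2 := real_inner_le_norm a (y - w)
  have h3 : ‖a‖ * ‖y - w‖ ≤ L * ‖y - w‖ := by gcongr
  linarith

theorem ParaAbove.mid {E : Type*} [NormedAddCommGroup E] [InnerProductSpace ℝ E]
    {u : E → ℝ} {L C : ℝ} (h : ParaAbove u L C) (y z : E) :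
    u y + u z ≤ 2 * u ((1 / 2 : ℝ) • (y + z)) + C / 4 * ‖y - z‖ ^ 2 := by
  obtain ⟨a, ha, h⟩ := h ((1 / 2 : ℝ) • (y + z))
  have h1 := h y
  have h2 := h z
  have e1 : y - (1 / 2 : ℝ) • (y + z) = (1 / 2 : ℝ) • (y - z) := by module
  have e2 : z - (1 / 2 : ℝ) • (y + z) = -((1 / 2 : ℝ) • (y - z)) := by module
  rw [e1] at h1
  rw [e2, inner_neg_right, norm_neg] at h2
  have e3 : ‖(1 / 2 : ℝ) • (y - z)‖ ^ 2 = 1 / 4 * ‖y - z‖ ^ 2 := by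
    rw [norm_smul, mul_pow]; norm_num
  rw [e3] at h1 h2
  linarith

theorem prox_exists {E : Type*} [NormedAddCommGroup E] [InnerProductSpace ℝ E]
    [FiniteDimensional ℝ E] {u : E → ℝ} {L C : ℝ} (hL : 0 ≤ L) (hC : 0 < C)
    (hu : Continuous u) (hP : ParaAbove u L C) (x : E) :
    ∃ y, ∀ y', u y' - C * ‖x - y'‖ ^ 2 ≤ u y - C * ‖x - y‖ ^ 2 := by
  have hR : 0 ≤ 2 * L / C := by positivity
  obtain ⟨y, hy, hmax⟩ := (isCompact_closedBall x (2 * L / C)).exists_isMaxOn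
    ⟨x, Metric.mem_closedBall_self hR⟩
    (f := fun y' => u y' - C * ‖x - y'‖ ^ 2) (by fun_prop)
  refine ⟨y, fun y' => ?_⟩
  by_cases h : y' ∈ Metric.closedBall x (2 * L / C)
  · exact hmax h
  · have h1 : u x - C * ‖x - x‖ ^ 2 ≤ u y - C * ‖x - y‖ ^ 2 :=
      hmax (Metric.mem_closedBall_self hR)
    have h2 := hP.bound x y'
    rw [Metric.mem_closedBall, dist_eq_norm, not_le, div_lt_iff₀ hC] at h
    rw [norm_sub_rev x y']
    simp only [sub_self, norm_zero] at h1
    nlinarith [norm_nonneg (y' - x)]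

theorem prox_near {E : Type*} [NormedAddCommGroup E] [InnerProductSpace ℝ E]
    {u : E → ℝ} {L C : ℝ} (hC : 0 < C) (hL : 0 ≤ L)
    (hP : ParaAbove u L C) {x y : E}
    (h : ∀ y', u y' - C * ‖x - y'‖ ^ 2 ≤ u y - C * ‖x - y‖ ^ 2) :
    ‖x - y‖ ≤ 2 * L / C := by
  have h1 := h x
  have h2 := hP.bound x y
  simp only [sub_self, norm_zero] at h1
  rw [norm_sub_rev y x] at h2
  rw [le_div_iff₀ hC]
  by_contra hh
  push Not at hh
  have : 0 < ‖x - y‖ := by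
    by_contra h0
    have : ‖x - y‖ = 0 := le_antisymm (not_lt.1 h0) (norm_nonneg _)
    rw [this] at hh; linarith
  nlinarith

theorem inner_four {E : Type*} [NormedAddCommGroup E] [InnerProductSpace ℝ E] (x x' y y' : E) :
    ‖x - y'‖ ^ 2 + ‖x' - y‖ ^ 2 - ‖x - y‖ ^ 2 - ‖x' - y'‖ ^ 2 = 2 * ⟪x - x', y - y'⟫_ℝ := by
  simp only [norm_sub_sq_real, inner_sub_left, inner_sub_right]
  ring

theorem prox_lip {E : Type*} [NormedAddCommGroup E] [InnerProductSpace ℝ E]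
    {u : E → ℝ} {L C : ℝ} (hC : 0 < C)
    (hP : ParaAbove u L C) {x y x' y' : E}
    (h : ∀ z, u z - C * ‖x - z‖ ^ 2 ≤ u y - C * ‖x - y‖ ^ 2)
    (h' : ∀ z, u z - C * ‖x' - z‖ ^ 2 ≤ u y' - C * ‖x' - y'‖ ^ 2) :
    ‖y - y'‖ ≤ 4 * ‖x - x'‖ := by
  have par : ∀ a : E, ‖a - (1 / 2 : ℝ) • (y + y')‖ ^ 2 =
      (‖a - y‖ ^ 2 + ‖a - y'‖ ^ 2) / 2 - ‖y - y'‖ ^ 2 / 4 := by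
    intro a
    have e : a - (1 / 2 : ℝ) • (y + y') = (1 / 2 : ℝ) • ((a - y) + (a - y')) := by module
    have e2 : y - y' = (a - y') - (a - y) := by abel
    rw [e, norm_smul, mul_pow, e2, norm_add_sq_real, norm_sub_sq_real (a - y') (a - y),
      real_inner_comm]
    norm_num
    ring
  have h1 := h ((1 / 2 : ℝ) • (y + y'))
  have h2 := h' ((1 / 2 : ℝ) • (y + y'))
  rw [par] at h1 h2
  have h3 := hP.mid y y'
  have h4 := inner_four x x' y y'
  have h5 := real_inner_le_norm (x - x') (y - y')
  have h6 : C * (‖y - y'‖ ^ 2) ≤ C * (4 * ‖x - x'‖ * ‖y - y'‖) := by nlinarith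
  have h7 := le_of_mul_le_mul_left h6 hC
  rcases (norm_nonneg (y - y')).eq_or_lt with h0 | h0
  · rw [← h0]; positivity
  · nlinarith

/-- bounds for the sup-convolution -/
theorem W_lower {E : Type*} [NormedAddCommGroup E] [InnerProductSpace ℝ E]
    {u : E → ℝ} {C : ℝ} {Y : E → E} {W : E → ℝ}
    (hW : ∀ x, W x = u (Y x) - C * ‖x - Y x‖ ^ 2)
    (hY : ∀ x z, u z - C * ‖x - z‖ ^ 2 ≤ W x) (x z : E) :
    W x + ⟪(2 * C) • (Y x - x), z - x⟫_ℝ - C * ‖z - x‖ ^ 2 ≤ W z := by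
  have h1 := hY z (Y x)
  have e : z - Y x = (z - x) - (Y x - x) := by abel
  rw [e, norm_sub_sq_real, norm_sub_rev (Y x) x] at h1
  rw [hW x, real_inner_smul_left, real_inner_comm]
  linarith

theorem W_hasFDerivAt {E : Type*} [NormedAddCommGroup E] [InnerProductSpace ℝ E]
    {u : E → ℝ} {C : ℝ} {Y : E → E} {W : E → ℝ} (hC : 0 < C)
    (hW : ∀ x, W x = u (Y x) - C * ‖x - Y x‖ ^ 2)
    (hY : ∀ x z, u z - C * ‖x - z‖ ^ 2 ≤ W x)
    (hl : ∀ x z, ‖Y x - Y z‖ ≤ 4 * ‖x - z‖) (x : E) :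
    HasFDerivAt W (innerSL ℝ ((2 * C) • (Y x - x))) x := by
  rw [hasFDerivAt_iff_isLittleO_nhds_zero]
  have key : ∀ h : E, ‖W (x + h) - W x - innerSL ℝ ((2 * C) • (Y x - x)) h‖ ≤ 9 * C * ‖h‖ ^ 2 := by
    intro h
    have h1 := W_lower hW hY x (x + h)
    have h2 := W_lower hW hY (x + h) x
    have e1 : x + h - x = h := by abel
    have e2 : x - (x + h) = -h := by abel
    rw [e1] at h1
    rw [e2, norm_neg, inner_neg_right, real_inner_smul_left] at h2
    rw [real_inner_smul_left] at h1
    have h3 := real_inner_le_norm (Y (x + h) - Y x) h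
    have h4 := hl (x + h) x
    rw [e1] at h4
    have h5 : ‖Y (x + h) - Y x‖ * ‖h‖ ≤ 4 * ‖h‖ * ‖h‖ := by gcongr
    have e3 : Y (x + h) - (x + h) = (Y (x + h) - Y x) + (Y x - x) - h := by abel
    rw [e3, inner_sub_left, inner_add_left, real_inner_self_eq_norm_sq] at h2
    rw [innerSL_apply_apply, real_inner_smul_left, Real.norm_eq_abs, abs_le]
    constructor <;> nlinarith [sq_nonneg ‖h‖]
  have : (fun h : E => W (x + h) - W x - innerSL ℝ ((2 * C) • (Y x - x)) h)
      =O[nhds 0] fun h => ‖h‖ ^ 2 :=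
    Asymptotics.IsBigO.of_bound (9 * C) (Filter.Eventually.of_forall fun h => by
      simpa using key h)
  refine this.trans_isLittleO ?_
  exact Asymptotics.IsLittleO.of_norm_right (by
    simpa using (Asymptotics.isLittleO_norm_pow_id (E' := E) (n := 2) (by norm_num)).norm_right)

/-- second order expansion of the sup-convolution where the proximal map is differentiable -/
theorem W_taylor {E : Type*} [NormedAddCommGroup E] [InnerProductSpace ℝ E]
    {C : ℝ} {Y : E → E} {W : E → ℝ} (hC : 0 < C)
    (hd : ∀ x, HasFDerivAt W (innerSL ℝ ((2 * C) • (Y x - x))) x)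
    {x : E} {D : E →L[ℝ] E} (hD : HasFDerivAt Y D x) :
    ∀ τ > 0, ∃ ρ > 0, ∀ h : E, ‖h‖ < ρ →
      |W (x + h) - W x - ⟪(2 * C) • (Y x - x), h⟫_ℝ
        - 1 / 2 * ⟪(2 * C) • (D h - h), h⟫_ℝ| ≤ τ * ‖h‖ ^ 2 := by
  intro τ hτ
  have hD' := hD
  rw [hasFDerivAt_iff_isLittleO_nhds_zero] at hD'
  have h1 := hD'.def (c := τ / (2 * C)) (by positivity)
  rw [Metric.eventually_nhds_iff] at h1
  obtain ⟨ρ, hρ, h1⟩ := h1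
  refine ⟨ρ, hρ, fun h hh => ?_⟩
  set r : ℝ → ℝ := fun t => W (x + t • h) - t * ⟪(2 * C) • (Y x - x), h⟫_ℝ
    - t ^ 2 / 2 * ⟪(2 * C) • (D h - h), h⟫_ℝ with hr
  set r' : ℝ → ℝ := fun t => ⟪(2 * C) • (Y (x + t • h) - (x + t • h)), h⟫_ℝ
    - 1 * ⟪(2 * C) • (Y x - x), h⟫_ℝ - (2 * t) / 2 * ⟪(2 * C) • (D h - h), h⟫_ℝ with hr'
  have hder : ∀ t, HasDerivAt r (r' t) t := by
    intro t
    have a1 : HasDerivAt (fun t : ℝ => x + t • h) h t := by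
      simpa using ((hasDerivAt_id t).smul_const h).const_add x
    have a2 := (hd (x + t • h)).comp_hasDerivAt t a1
    have a3 : HasDerivAt (fun t : ℝ => t * ⟪(2 * C) • (Y x - x), h⟫_ℝ)
      (1 * ⟪(2 * C) • (Y x - x), h⟫_ℝ) t := (hasDerivAt_id t).mul_const _
    have a4 : HasDerivAt (fun t : ℝ => t ^ 2 / 2 * ⟪(2 * C) • (D h - h), h⟫_ℝ)
      ((2 * t) / 2 * ⟪(2 * C) • (D h - h), h⟫_ℝ) t := by
      have := ((hasDerivAt_pow 2 t).div_const 2).mul_const ⟪(2 * C) • (D h - h), h⟫_ℝ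
      simpa using this
    exact (a2.sub a3).sub a4
  have hb : ∀ t ∈ Set.Icc (0 : ℝ) 1, ‖r' t‖ ≤ τ * ‖h‖ ^ 2 := by
    intro t ht
    have ht' : ‖t • h‖ ≤ ‖h‖ := by
      rw [norm_smul, Real.norm_eq_abs, abs_of_nonneg ht.1]
      exact mul_le_of_le_one_left (norm_nonneg _) ht.2
    have b1 := h1 (y := t • h) (by simpa using ht'.trans_lt hh)
    have e : r' t = 2 * C * ⟪Y (x + t • h) - Y x - D (t • h), h⟫_ℝ := by
      simp only [hr', real_inner_smul_left, inner_sub_left, inner_add_left, map_smul]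
      ring
    rw [e, norm_mul, Real.norm_eq_abs, abs_of_pos (by positivity : 0 < 2 * C)]
    calc 2 * C * ‖⟪Y (x + t • h) - Y x - D (t • h), h⟫_ℝ‖
        ≤ 2 * C * (τ / (2 * C) * ‖h‖ * ‖h‖) := by
          gcongr
          refine (norm_inner_le_norm _ _).trans ?_
          gcongr
          refine b1.trans ?_
          gcongr
      _ = τ * ‖h‖ ^ 2 := by field_simp
  have := (convex_Icc (0 : ℝ) 1).norm_image_sub_le_of_norm_hasDerivWithin_le
    (fun t _ => (hder t).hasDerivWithinAt) hb (x := 0) (y := 1) (by simp) (by simp)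
  simp only [hr, sub_zero, norm_one, mul_one, one_smul, zero_smul, add_zero, Real.norm_eq_abs] at this
  refine le_trans (le_of_eq ?_) this
  congr 1
  ring

end Analysis
section Contact

theorem lin_eq {E : Type*} [NormedAddCommGroup E] [InnerProductSpace ℝ E] {q p : E} {c : ℝ}
    (hc : 0 < c) (h : ∀ z : E, ⟪q, z⟫_ℝ - c * ‖z‖ ^ 2 ≤ ⟪p, z⟫_ℝ) : q = p := by
  have h1 := h ((1 / (2 * c)) • (q - p))
  rw [real_inner_smul_right, real_inner_smul_right, norm_smul, mul_pow] at h1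
  have h2 : ⟪q, q - p⟫_ℝ - ⟪p, q - p⟫_ℝ = ‖q - p‖ ^ 2 := by
    rw [← inner_sub_left, real_inner_self_eq_norm_sq]
  have h3 : c * (‖1 / (2 * c)‖ ^ 2 * ‖q - p‖ ^ 2) = 1 / (4 * c) * ‖q - p‖ ^ 2 := by
    rw [Real.norm_eq_abs, sq_abs]; field_simp; ring
  rw [h3] at h1
  have h4 : 1 / (2 * c) * ‖q - p‖ ^ 2 ≤ 1 / (4 * c) * ‖q - p‖ ^ 2 := by
    rw [← h2] at h1 ⊢; linarith
  have h5 : 1 / (2 * c) = 2 * (1 / (4 * c)) := by field_simp; norm_num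
  have h6 : 0 < 1 / (4 * c) := by positivity
  rw [h5] at h4
  have h7 : ‖q - p‖ ^ 2 ≤ 0 := by nlinarith
  have : ‖q - p‖ = 0 := by nlinarith [norm_nonneg (q - p), sq_nonneg ‖q - p‖]
  exact sub_eq_zero.1 (norm_eq_zero.1 this)

/-- the contact relation -/
def Contact {E : Type*} [NormedAddCommGroup E] [InnerProductSpace ℝ E]
    (W v : E → ℝ) (K : Set E) (C : ℝ) (p x ξ : E) : Prop :=
  ξ ∈ K ∧ ∀ z, ∀ ζ ∈ K, W z - v ζ - 2 * C * ‖ζ - z‖ ^ 2 - ⟪p, z⟫_ℝ ≤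
    W x - v ξ - 2 * C * ‖ξ - x‖ ^ 2 - ⟪p, x⟫_ℝ

theorem contact_lower {E : Type*} [NormedAddCommGroup E] [InnerProductSpace ℝ E]
    {W v : E → ℝ} {K : Set E} {C : ℝ} (hC : 0 < C) {g : E → E}
    (hg : ∀ x z, W x + ⟪g x, z - x⟫_ℝ - C * ‖z - x‖ ^ 2 ≤ W z)
    {p x ξ : E} (h : Contact W v K C p x ξ) (z : E) :
    W x - v ξ - 2 * C * ‖ξ - x‖ ^ 2 + ⟪p, z - x⟫_ℝ - 3 * C * ‖z - x‖ ^ 2 ≤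
      W z - v ξ - 2 * C * ‖ξ - z‖ ^ 2 := by
  have key : ∀ z : E, ‖ξ - z‖ ^ 2 = ‖ξ - x‖ ^ 2 - 2 * ⟪ξ - x, z - x⟫_ℝ + ‖z - x‖ ^ 2 := by
    intro z
    rw [← norm_sub_sq_real]; congr 2; abel
  have hq : g x + (4 * C) • (ξ - x) = p := by
    refine lin_eq (c := 3 * C) (by positivity) fun w => ?_
    have h1 := h.2 (x + w) ξ h.1
    have h2 := hg x (x + w)
    have h3 := key (x + w)
    rw [h3] at h1
    rw [add_sub_cancel_left] at h1 h2
    rw [inner_add_right] at h1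
    rw [inner_add_left, real_inner_smul_left]
    linarith
  have h2 := hg x z
  rw [key z, ← hq, inner_add_left, real_inner_smul_left]
  linarith

theorem contact_lip {E : Type*} [NormedAddCommGroup E] [InnerProductSpace ℝ E]
    {W v : E → ℝ} {K : Set E} {C : ℝ} (hC : 0 < C) {g : E → E}
    (hg : ∀ x z, W x + ⟪g x, z - x⟫_ℝ - C * ‖z - x‖ ^ 2 ≤ W z)
    {p x ξ p' x' ξ' : E} (h : Contact W v K C p x ξ) (h' : Contact W v K C p' x' ξ') :
    ‖p - p'‖ ≤ 6 * C * ‖x - x'‖ := by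
  set t : ℝ := 1 / (6 * C) with ht
  set z : E := x' - t • (p - p') with hz
  have a1 := h.2 z ξ' h'.1
  have a2 := contact_lower hC hg h' z
  have a3 := contact_lower hC hg h x'
  have a4 := h'.2 x' ξ h.1
  have e1 : z - x' = -(t • (p - p')) := by rw [hz]; abel
  have e2 : ⟪p, z⟫_ℝ = ⟪p, x'⟫_ℝ - t * ⟪p, p - p'⟫_ℝ := by
    rw [hz, inner_sub_right, real_inner_smul_right]
  have e3 : ⟪p', z - x'⟫_ℝ = - (t * ⟪p', p - p'⟫_ℝ) := by
    rw [e1, inner_neg_right, real_inner_smul_right]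
  have e4 : ‖z - x'‖ ^ 2 = t ^ 2 * ‖p - p'‖ ^ 2 := by
    rw [e1, norm_neg, norm_smul, mul_pow, Real.norm_eq_abs, sq_abs]
  have e5 : ⟪p, p - p'⟫_ℝ - ⟪p', p - p'⟫_ℝ = ‖p - p'‖ ^ 2 := by
    rw [← inner_sub_left, real_inner_self_eq_norm_sq]
  rw [e2] at a1
  rw [e3, e4] at a2
  rw [inner_sub_right, norm_sub_rev x' x] at a3
  have h1 : t * ‖p - p'‖ ^ 2 - 3 * C * (t ^ 2 * ‖p - p'‖ ^ 2) ≤ 3 * C * ‖x - x'‖ ^ 2 := by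
    have e6 : t * ‖p - p'‖ ^ 2 = t * ⟪p, p - p'⟫_ℝ - t * ⟪p', p - p'⟫_ℝ := by
      rw [← e5]; ring
    linarith
  have h2 : t * ‖p - p'‖ ^ 2 - 3 * C * (t ^ 2 * ‖p - p'‖ ^ 2) = ‖p - p'‖ ^ 2 / (12 * C) := by
    rw [ht]; field_simp; ring
  rw [h2, div_le_iff₀ (by positivity)] at h1
  refine abs_le_of_sq_le_sq' ?_ (by positivity) |>.2
  nlinarith

theorem contact_exists {E : Type*} [NormedAddCommGroup E] [InnerProductSpace ℝ E]
    [FiniteDimensional ℝ E]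
    {W v : E → ℝ} {K : Set E} {C M : ℝ} (hC : 0 < C) (hM : 0 ≤ M)
    (hW : Continuous W) (hK : IsCompact K) (hKne : K.Nonempty) (hv : LowerSemicontinuousOn v K)
    (hWg : ∀ x z, W x ≤ W z + C * ‖z - x‖ ^ 2 + M * ‖z - x‖) (p : E) :
    ∃ x ξ, Contact W v K C p x ξ := by
  obtain ⟨R0, hR0⟩ := hK.isBounded.exists_norm_le
  obtain ⟨k0, hk0⟩ := hKne
  have hR00 : 0 ≤ R0 := (norm_nonneg _).trans (hR0 k0 hk0)
  set R : ℝ := R0 + (M + ‖p‖) / C with hR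
  have hR' : R0 ≤ R := by
    rw [hR]; have : 0 ≤ (M + ‖p‖) / C := by positivity
    linarith
  have hcomp : IsCompact (K ×ˢ Metric.closedBall (0 : E) R) :=
    hK.prod (isCompact_closedBall _ _)
  have hlsc : LowerSemicontinuousOn (fun q : E × E =>
      v q.1 + (2 * C * ‖q.1 - q.2‖ ^ 2 + ⟪p, q.2⟫_ℝ - W q.2)) (K ×ˢ Metric.closedBall (0 : E) R) := by
    refine LowerSemicontinuousOn.add ?_ ?_
    · intro q hq y hy
      have h1 := hv q.1 hq.1 y hy
      have h2 : Tendsto (Prod.fst : E × E → E)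
          (nhdsWithin q (K ×ˢ Metric.closedBall (0 : E) R)) (nhdsWithin q.1 K) := by
        refine tendsto_nhdsWithin_of_tendsto_nhds_of_eventually_within _ ?_ ?_
        · exact (continuous_fst.tendsto q).mono_left nhdsWithin_le_nhds
        · filter_upwards [self_mem_nhdsWithin] with a ha using ha.1
      exact h2.eventually h1
    · refine Continuous.lowerSemicontinuous ?_ |>.lowerSemicontinuousOn _
      fun_prop
  have hne : (K ×ˢ Metric.closedBall (0 : E) R).Nonempty :=
    ⟨(k0, k0), hk0, by simpa using (hR0 k0 hk0).trans hR'⟩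
  obtain ⟨⟨ξ, x⟩, ⟨hξ, hx⟩, hmin⟩ := hlsc.exists_isMinOn hne hcomp
  refine ⟨x, ξ, hξ, fun z ζ hζ => ?_⟩
  have hmin' : ∀ ζ ∈ K, ∀ z : E, ‖z‖ ≤ R → v ξ + (2 * C * ‖ξ - x‖ ^ 2 + ⟪p, x⟫_ℝ - W x) ≤
      v ζ + (2 * C * ‖ζ - z‖ ^ 2 + ⟪p, z⟫_ℝ - W z) := by
    intro ζ hζ z hz
    exact hmin (show (ζ, z) ∈ _ from ⟨hζ, by simpa using hz⟩)
  by_cases hz : ‖z‖ ≤ R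
  · have := hmin' ζ hζ z hz
    linarith
  · have h1 := hmin' ζ hζ ζ ((hR0 ζ hζ).trans hR')
    simp only [sub_self, norm_zero] at h1
    have h2 := hWg z ζ
    have h3 : (M + ‖p‖) / C ≤ ‖ζ - z‖ := by
      have := norm_sub_norm_le z ζ
      rw [norm_sub_rev] at this
      have := hR0 ζ hζ
      linarith
    rw [div_le_iff₀ hC] at h3
    have h4 := real_inner_le_norm p (ζ - z)
    rw [inner_sub_right] at h4
    nlinarith [norm_nonneg (ζ - z)]

theorem contact_near {E : Type*} [NormedAddCommGroup E] [InnerProductSpace ℝ E]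
    {W v : E → ℝ} {K : Set E} {C M : ℝ} (hC : 0 < C) (hM : 0 ≤ M)
    (hWg : ∀ x z, W x ≤ W z + C * ‖z - x‖ ^ 2 + M * ‖z - x‖) {p x ξ : E}
    (h : Contact W v K C p x ξ) : ‖ξ - x‖ ≤ (M + ‖p‖) / C := by
  have h1 := h.2 ξ ξ h.1
  simp only [sub_self, norm_zero] at h1
  have h2 := hWg x ξ
  have h4 := real_inner_le_norm p (ξ - x)
  rw [inner_sub_right] at h4
  rw [le_div_iff₀ hC]
  rcases (norm_nonneg (ξ - x)).eq_or_lt with h0 | h0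
  · rw [← h0]; simp; positivity
  · have : ‖ξ - x‖ * (‖ξ - x‖ * C) ≤ ‖ξ - x‖ * (M + ‖p‖) := by nlinarith
    exact le_of_mul_le_mul_left this h0

open MeasureTheory in
/-- Jensen type lemma: a contact point at which a given Lipschitz map is differentiable. -/
theorem contact_diff {E : Type*} [NormedAddCommGroup E] [InnerProductSpace ℝ E]
    [FiniteDimensional ℝ E]
    {W v : E → ℝ} {K : Set E} {C r : ℝ} (hC : 0 < C) (hr : 0 < r) {g : E → E}
    (hg : ∀ x z, W x + ⟪g x, z - x⟫_ℝ - C * ‖z - x‖ ^ 2 ≤ W z)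
    (hex : ∀ p, ∃ x ξ, Contact W v K C p x ξ)
    {Y : E → E} (hl : LipschitzWith 4 Y) :
    ∃ p x ξ, ‖p‖ ≤ r ∧ Contact W v K C p x ξ ∧ DifferentiableAt ℝ Y x := by
  let _ : MeasurableSpace E := borel E
  have : BorelSpace E := ⟨rfl⟩
  by_contra hcon
  push Not at hcon
  set μ : Measure E := μH[(Module.finrank ℝ E : ℝ)] with hμ
  have hae : ∀ᵐ x ∂μ, DifferentiableAt ℝ Y x := hl.ae_differentiableAt
  set S : Set E := {x | ∃ p ξ, ‖p‖ ≤ r ∧ Contact W v K C p x ξ} with hS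
  have hS0 : μ S = 0 := by
    refine measure_mono_null ?_ hae
    rintro x ⟨p, ξ, hp, hx⟩
    exact hcon p x ξ hp hx
  have hch : ∀ x, ∃ p, x ∈ S → ∃ ξ, ‖p‖ ≤ r ∧ Contact W v K C p x ξ := by
    intro x
    by_cases h : x ∈ S
    · obtain ⟨p, ξ, h⟩ := h
      exact ⟨p, fun _ => ⟨ξ, h⟩⟩
    · exact ⟨0, fun h' => absurd h' h⟩
  choose P hPP using hch
  have hlip : LipschitzOnWith (6 * C).toNNReal P S := by
    refine LipschitzOnWith.of_dist_le_mul fun x hx y hy => ?_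
    obtain ⟨ξ, -, h1⟩ := hPP x hx
    obtain ⟨ξ', -, h2⟩ := hPP y hy
    rw [dist_eq_norm, dist_eq_norm, Real.coe_toNNReal _ (by positivity)]
    exact contact_lip hC hg h1 h2
  have h1 : μ (P '' S) = 0 := by
    have := hlip.hausdorffMeasure_image_le (d := (Module.finrank ℝ E : ℝ)) (by positivity)
    rw [← hμ, hS0, mul_zero] at this
    exact le_antisymm this bot_le
  have h2 : Metric.ball (0 : E) r ⊆ P '' S := by
    intro p hp
    obtain ⟨x, ξ, hx⟩ := hex p
    have hp' : ‖p‖ ≤ r := by simpa using (Metric.mem_ball.1 hp).le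
    have hxS : x ∈ S := ⟨p, ξ, hp', hx⟩
    refine ⟨x, hxS, ?_⟩
    obtain ⟨ξ', -, h1⟩ := hPP x hxS
    have := contact_lip hC hg h1 hx
    simp only [sub_self, norm_zero, mul_zero] at this
    exact sub_eq_zero.1 (norm_eq_zero.1 (le_antisymm this (norm_nonneg _)))
  have h3 : 0 < μ (Metric.ball (0 : E) r) := Metric.measure_ball_pos μ 0 hr
  exact absurd (measure_mono_null h2 h1) h3.ne'

end Contact
section Core

theorem quad_of_clm {n : ℕ} (G : EuclideanSpace ℝ (Fin n) →L[ℝ] EuclideanSpace ℝ (Fin n)) :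
    ∃ Z : Matrix (Fin n) (Fin n) ℝ, Z.IsSymm ∧ ∀ h, quadForm Z h = ⟪G h, h⟫_ℝ := by
  set N : Matrix (Fin n) (Fin n) ℝ := fun i j => (G (EuclideanSpace.single j 1)) i with hN
  refine ⟨(1 / 2 : ℝ) • (N + Nᵀ), ?_, fun h => ?_⟩
  · unfold Matrix.IsSymm
    ext i j
    simp
    ring
  · have h1 : ∀ i, (G h) i = ∑ j, N i j * h j := by
      intro i
      have e : h = ∑ j, h j • (EuclideanSpace.single j (1 : ℝ)) := by
        ext k
        simp [Finset.sum_apply, Pi.single_apply]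
      conv_lhs => rw [e]
      simp [map_sum, Finset.sum_apply, hN, mul_comm]
    have h2 : ⟪G h, h⟫_ℝ = ∑ i, ∑ j, N i j * h i * h j := by
      rw [PiLp.inner_apply]
      refine Finset.sum_congr rfl fun i _ => ?_
      rw [h1 i]
      simp only [RCLike.inner_apply, conj_trivial, Finset.mul_sum]
      refine Finset.sum_congr rfl fun j _ => ?_
      ring
    have h3 : ∑ i, ∑ j, N i j * h i * h j = ∑ i, ∑ j, N j i * h i * h j := by
      rw [Finset.sum_comm]
      refine Finset.sum_congr rfl fun i _ => Finset.sum_congr rfl fun j _ => ?_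
      ring
    rw [h2]
    unfold quadForm
    have h4 : ∑ i, ∑ j, ((1 / 2 : ℝ) • (N + Nᵀ)) i j * h i * h j =
      1 / 2 * (∑ i, ∑ j, N i j * h i * h j) + 1 / 2 * (∑ i, ∑ j, N j i * h i * h j) := by
      simp only [Finset.mul_sum, ← Finset.sum_add_distrib]
      refine Finset.sum_congr rfl fun i _ => Finset.sum_congr rfl fun j _ => ?_
      simp
      ring
    rw [h4, ← h3]
    ring

/-- inf-convolution of a quadratic form -/
theorem parallel_sum {E : Type*} [NormedAddCommGroup E] [InnerProductSpace ℝ E]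
    [FiniteDimensional ℝ E] {C : ℝ} (hC : 0 < C) (G : E →L[ℝ] E)
    (hs : ∀ a b, ⟪G a, b⟫_ℝ = ⟪G b, a⟫_ℝ) (hG : ∀ h, -(3 * C * ‖h‖ ^ 2) ≤ ⟪G h, h⟫_ℝ) :
    ∃ M Q : E →L[ℝ] E, (∀ h, ⟪Q h, h⟫_ℝ = ⟪G (M h), M h⟫_ℝ + 4 * C * ‖h - M h‖ ^ 2) ∧
      ∀ h h', ⟪Q h, h⟫_ℝ ≤ ⟪G h', h'⟫_ℝ + 4 * C * ‖h - h'‖ ^ 2 := by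
  set T : E →ₗ[ℝ] E := (G : E →ₗ[ℝ] E) + (4 * C) • LinearMap.id with hT
  have hTa : ∀ h, T h = G h + (4 * C) • h := fun h => by simp [hT]
  have hinj : Function.Injective T := by
    rw [injective_iff_map_eq_zero]
    intro a ha
    have h1 : ⟪T a, a⟫_ℝ = 0 := by rw [ha, inner_zero_left]
    rw [hTa, inner_add_left, real_inner_smul_left, real_inner_self_eq_norm_sq] at h1
    have := hG a
    have h2 : ‖a‖ ^ 2 ≤ 0 := by nlinarith
    have : ‖a‖ = 0 := by nlinarith [norm_nonneg a, sq_nonneg ‖a‖]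
    exact norm_eq_zero.1 this
  set e := LinearEquiv.ofInjectiveEndo T hinj with he
  set M : E →L[ℝ] E := (4 * C) • (LinearMap.toContinuousLinearMap (e.symm : E →ₗ[ℝ] E)) with hM
  have hTM : ∀ h, G (M h) + (4 * C) • M h = (4 * C) • h := by
    intro h
    rw [← hTa]
    have : T (e.symm h) = h := e.apply_symm_apply h
    simp [hM, this]
  have hGM : ∀ h, G (M h) = (4 * C) • (h - M h) := by
    intro h
    rw [smul_sub, ← hTM h]; abel
  refine ⟨M, (4 * C) • (ContinuousLinearMap.id ℝ E - M), ?_, ?_⟩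
  · intro h
    rw [hGM]
    simp only [_root_.smul_apply, _root_.sub_apply,
      ContinuousLinearMap.id_apply, real_inner_smul_left]
    rw [← real_inner_self_eq_norm_sq (h - M h)]
    simp only [inner_sub_left, inner_sub_right]
    rw [real_inner_comm h (M h)]
    ring
  · intro h h'
    have h1 := hG (h' - M h)
    have h2 := hs (h' - M h) (M h)
    have h3 : ⟪G h', h'⟫_ℝ = ⟪G (M h), M h⟫_ℝ + ⟪G (h' - M h), M h⟫_ℝ
        + ⟪G (M h), h' - M h⟫_ℝ + ⟪G (h' - M h), h' - M h⟫_ℝ := by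
      simp only [map_sub, inner_sub_left, inner_sub_right]; ring
    have h4 : ‖h - h'‖ ^ 2 = ‖h - M h‖ ^ 2 - 2 * ⟪h - M h, h' - M h⟫_ℝ + ‖h' - M h‖ ^ 2 := by
      rw [← norm_sub_sq_real]; congr 2; abel
    have h5 : ⟪((4 * C) • (ContinuousLinearMap.id ℝ E - M)) h, h⟫_ℝ =
        ⟪G (M h), M h⟫_ℝ + 4 * C * ‖h - M h‖ ^ 2 := by
      rw [hGM]
      simp only [_root_.smul_apply, _root_.sub_apply,
        ContinuousLinearMap.id_apply, real_inner_smul_left]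
      rw [← real_inner_self_eq_norm_sq (h - M h)]
      simp only [inner_sub_left, inner_sub_right]
      rw [real_inner_comm h (M h)]
      ring
    rw [h5, h3, h4, h2, hGM h]
    simp only [real_inner_smul_left]
    nlinarith [sq_nonneg ‖h' - M h‖]

theorem core_jets {n : ℕ} {u v : EuclideanSpace ℝ (Fin n) → ℝ}
    {K : Set (EuclideanSpace ℝ (Fin n))} {L C r : ℝ} (hL : 0 ≤ L) (hC : 0 < C) (hr : 0 < r)
    (hu : Continuous u) (hP : ParaAbove u L C)
    (hK : IsCompact K) (hKne : K.Nonempty) (hv : LowerSemicontinuousOn v K) :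
    ∃ (p x ξ y : EuclideanSpace ℝ (Fin n)) (Z Q : Matrix (Fin n) (Fin n) ℝ),
      ‖p‖ ≤ r ∧ ξ ∈ K ∧ ‖x - y‖ ≤ 2 * L / C ∧ ‖ξ - x‖ ≤ (4 * L + r) / C ∧
      (∀ ζ ∈ K, u ζ - v ζ - ⟪p, ζ⟫_ℝ ≤ u y - v ξ - ⟪p, x⟫_ℝ) ∧
      Z.IsSymm ∧ Q.IsSymm ∧
      (∀ τ > 0, ∃ ρ > 0, ∀ h, ‖h‖ < ρ → ξ + h ∈ K →
        v ξ + ⟪(2 * C) • (y - x) - p, h⟫_ℝ + 1 / 2 * quadForm Z h - τ * ‖h‖ ^ 2 ≤ v (ξ + h)) ∧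
      (∀ τ > 0, ∃ ρ > 0, ∀ h, ‖h‖ < ρ →
        u (y + h) ≤ u y + ⟪(2 * C) • (y - x), h⟫_ℝ + 1 / 2 * quadForm Q h + τ * ‖h‖ ^ 2) ∧
      (∀ h h', quadForm Q h ≤ quadForm Z h' + 4 * C * ‖h - h'‖ ^ 2) := by
  choose Y hY0 using prox_exists hL hC hu hP
  set W : EuclideanSpace ℝ (Fin n) → ℝ := fun x => u (Y x) - C * ‖x - Y x‖ ^ 2 with hWdef
  have hW : ∀ x, W x = u (Y x) - C * ‖x - Y x‖ ^ 2 := fun x => rfl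
  have hY : ∀ x z, u z - C * ‖x - z‖ ^ 2 ≤ W x := hY0
  have hl : ∀ x z, ‖Y x - Y z‖ ≤ 4 * ‖x - z‖ := fun x z => prox_lip hC hP (hY0 x) (hY0 z)
  have hlip : LipschitzWith 4 Y := LipschitzWith.of_dist_le_mul fun x z => by
    rw [dist_eq_norm, dist_eq_norm]; exact hl x z
  have hd := W_hasFDerivAt hC hW hY hl
  have hlow := W_lower hW hY
  have hWc : Continuous W := continuous_iff_continuousAt.2 fun x => (hd x).continuousAt
  have hnear : ∀ x, ‖x - Y x‖ ≤ 2 * L / C := fun x => prox_near hC hL hP (hY0 x)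
  have hWg : ∀ x z, W x ≤ W z + C * ‖z - x‖ ^ 2 + 4 * L * ‖z - x‖ := by
    intro x z
    have h1 := hlow x z
    have h2 := real_inner_le_norm ((2 * C) • (x - Y x)) (z - x)
    have h3 : ‖(2 * C) • (x - Y x)‖ ≤ 4 * L := by
      rw [norm_smul, Real.norm_eq_abs, abs_of_pos (by positivity : 0 < 2 * C)]
      have := hnear x
      rw [le_div_iff₀ hC] at this
      linarith
    have h4 : ‖(2 * C) • (x - Y x)‖ * ‖z - x‖ ≤ 4 * L * ‖z - x‖ := by gcongr
    have e : (2 * C) • (x - Y x) = -((2 * C) • (Y x - x)) := by module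
    rw [e, inner_neg_left, ← e] at h2
    linarith
  obtain ⟨p, x, ξ, hp, hcon, hdiff⟩ := contact_diff hC hr hlow
    (contact_exists hC (by positivity) hWc hK hKne hv hWg) hlip
  obtain ⟨D, hD⟩ := hdiff
  have htay := W_taylor hC hd hD
  set G0 : EuclideanSpace ℝ (Fin n) →L[ℝ] EuclideanSpace ℝ (Fin n) :=
    (2 * C) • (D - ContinuousLinearMap.id ℝ _) with hG0
  set G : EuclideanSpace ℝ (Fin n) →L[ℝ] EuclideanSpace ℝ (Fin n) :=
    (1 / 2 : ℝ) • (G0 + ContinuousLinearMap.adjoint G0) with hG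
  have hGs : ∀ a b, ⟪G a, b⟫_ℝ = 1 / 2 * (⟪G0 a, b⟫_ℝ + ⟪G0 b, a⟫_ℝ) := by
    intro a b
    simp only [hG, _root_.smul_apply, _root_.add_apply,
      real_inner_smul_left, inner_add_left, ContinuousLinearMap.adjoint_inner_left]
    rw [real_inner_comm a (G0 b)]
  have hGq : ∀ h, ⟪G h, h⟫_ℝ = ⟪(2 * C) • (D h - h), h⟫_ℝ := by
    intro h
    rw [hGs]
    simp only [hG0, _root_.smul_apply, _root_.sub_apply,
      ContinuousLinearMap.id_apply]
    ring
  have hGlow : ∀ h, -(3 * C * ‖h‖ ^ 2) ≤ ⟪G h, h⟫_ℝ := by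
    intro h
    obtain ⟨ρ, hρ, ht⟩ := htay (C / 2) (by positivity)
    obtain ⟨s, hs, hs'⟩ : ∃ s : ℝ, 0 < s ∧ s * ‖h‖ < ρ := by
      refine ⟨ρ / (‖h‖ + 1), by positivity, ?_⟩
      rw [div_mul_eq_mul_div, div_lt_iff₀ (by positivity)]
      nlinarith [norm_nonneg h]
    have hn : ‖s • h‖ = s * ‖h‖ := by rw [norm_smul, Real.norm_eq_abs, abs_of_pos hs]
    have h1 := (abs_le.1 (ht (s • h) (by rwa [hn]))).2
    have h2 := hlow x (x + s • h)
    rw [add_sub_cancel_left] at h2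
    rw [← hGq, map_smul, real_inner_smul_left (G h), real_inner_smul_right (G h)] at h1
    rw [hn] at h1 h2
    have h3 : s ^ 2 * (-(3 * C * ‖h‖ ^ 2)) ≤ s ^ 2 * ⟪G h, h⟫_ℝ := by nlinarith
    exact le_of_mul_le_mul_left h3 (by positivity)
  obtain ⟨M, Qc, hQ1, hQ2⟩ := parallel_sum hC G
    (fun a b => by rw [hGs, hGs]; ring) hGlow
  obtain ⟨Z, hZs, hZ⟩ := quad_of_clm G
  obtain ⟨Q, hQs, hQ⟩ := quad_of_clm Qc
  refine ⟨p, x, ξ, Y x, Z, Q, hp, hcon.1, hnear x, ?_, ?_, hZs, hQs, ?_, ?_, ?_⟩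
  · refine (contact_near hC (by positivity) hWg hcon).trans ?_
    gcongr
  · intro ζ hζ
    have h1 := hcon.2 ζ ζ hζ
    have h2 := hY ζ ζ
    simp only [sub_self, norm_zero] at h1 h2
    have h3 := hW x
    nlinarith [sq_nonneg ‖x - Y x‖, sq_nonneg ‖ξ - x‖]
  · intro τ hτ
    obtain ⟨ρ, hρ, ht⟩ := htay τ hτ
    refine ⟨ρ, hρ, fun h hh hK' => ?_⟩
    have h1 := (abs_le.1 (ht h hh)).1
    have h2 := hcon.2 (x + h) (ξ + h) hK'
    rw [add_sub_add_right_eq_sub, inner_add_right] at h2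
    rw [hZ, hGq, inner_sub_left]
    linarith
  · intro τ hτ
    obtain ⟨ρ, hρ, ht⟩ := htay (τ / (‖M‖ + 1) ^ 2) (by positivity)
    refine ⟨ρ / (‖M‖ + 1), by positivity, fun h hh => ?_⟩
    rw [lt_div_iff₀ (by positivity)] at hh
    have hMh : ‖M h‖ ≤ (‖M‖ + 1) * ‖h‖ := by
      have := M.le_opNorm h
      nlinarith [norm_nonneg h]
    have h1 := (abs_le.1 (ht (M h) (by linarith))).2
    have h2 := hY (x + M h) (Y x + h)
    have e : x + M h - (Y x + h) = -((Y x - x) + (h - M h)) := by abel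
    rw [e, norm_neg, norm_add_sq_real] at h2
    have h3 := hW x
    rw [norm_sub_rev x (Y x)] at h3
    rw [hQ, hQ1, hGq]
    have h4 : τ / (‖M‖ + 1) ^ 2 * ‖M h‖ ^ 2 ≤ τ * ‖h‖ ^ 2 := by
      calc τ / (‖M‖ + 1) ^ 2 * ‖M h‖ ^ 2 ≤ τ / (‖M‖ + 1) ^ 2 * ((‖M‖ + 1) * ‖h‖) ^ 2 := by gcongr
        _ = τ * ‖h‖ ^ 2 := by field_simp
    rw [real_inner_smul_left] at h1 ⊢
    rw [inner_sub_right] at h2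
    nlinarith [sq_nonneg ‖h - M h‖]
  · intro h h'
    rw [hQ, hZ]
    exact hQ2 h h'

end Core
section Matrices

theorem quadForm_add {n : ℕ} (X Y : Matrix (Fin n) (Fin n) ℝ) (h : EuclideanSpace ℝ (Fin n)) :
    quadForm (X + Y) h = quadForm X h + quadForm Y h := by
  unfold quadForm
  simp only [← Finset.sum_add_distrib]
  refine Finset.sum_congr rfl fun i _ => Finset.sum_congr rfl fun j _ => ?_
  simp; ring

theorem quadForm_smul {n : ℕ} (c : ℝ) (X : Matrix (Fin n) (Fin n) ℝ)
    (h : EuclideanSpace ℝ (Fin n)) : quadForm (c • X) h = c * quadForm X h := by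
  unfold quadForm
  simp only [Finset.mul_sum]
  refine Finset.sum_congr rfl fun i _ => Finset.sum_congr rfl fun j _ => ?_
  simp; ring

theorem quadForm_neg {n : ℕ} (X : Matrix (Fin n) (Fin n) ℝ)
    (h : EuclideanSpace ℝ (Fin n)) : quadForm (-X) h = - quadForm X h := by
  have := quadForm_smul (-1) X h
  simpa using this

theorem inner_eq_sum {n : ℕ} (a b : EuclideanSpace ℝ (Fin n)) : ⟪a, b⟫_ℝ = ∑ i, a i * b i := by
  rw [PiLp.inner_apply]
  refine Finset.sum_congr rfl fun i _ => ?_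
  simp [mul_comm]

/-- rank one matrix -/
def rankOne {n : ℕ} (g : EuclideanSpace ℝ (Fin n)) : Matrix (Fin n) (Fin n) ℝ :=
  fun i j => g i * g j

theorem quadForm_rankOne {n : ℕ} (g h : EuclideanSpace ℝ (Fin n)) :
    quadForm (rankOne g) h = ⟪g, h⟫_ℝ ^ 2 := by
  unfold quadForm rankOne
  rw [inner_eq_sum, sq, Finset.sum_mul_sum]
  refine Finset.sum_congr rfl fun i _ => Finset.sum_congr rfl fun j _ => ?_
  ring

theorem quadForm_bound {n : ℕ} (X : Matrix (Fin n) (Fin n) ℝ) :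
    ∃ k, 0 ≤ k ∧ ∀ h : EuclideanSpace ℝ (Fin n), |quadForm X h| ≤ k * ‖h‖ ^ 2 := by
  refine ⟨∑ i, ∑ j, |X i j|, by positivity, fun h => ?_⟩
  unfold quadForm
  rw [Finset.sum_mul]
  refine (Finset.abs_sum_le_sum_abs _ _).trans (Finset.sum_le_sum fun i _ => ?_)
  rw [Finset.sum_mul]
  refine (Finset.abs_sum_le_sum_abs _ _).trans (Finset.sum_le_sum fun j _ => ?_)
  have h1 : |h i| ≤ ‖h‖ := by simpa using PiLp.norm_apply_le h i
  have h2 : |h j| ≤ ‖h‖ := by simpa using PiLp.norm_apply_le h j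
  rw [abs_mul, abs_mul, mul_assoc, sq]
  gcongr

/-- The `j`-th column. -/
def colVec {n r : ℕ} (S : Matrix (Fin n) (Fin r) ℝ) (j : Fin r) : EuclideanSpace ℝ (Fin n) :=
  WithLp.toLp 2 (fun i => S i j)

theorem trace_eq {n r : ℕ} (S : Matrix (Fin n) (Fin r) ℝ) (X : Matrix (Fin n) (Fin n) ℝ) :
    Matrix.trace (S * Sᵀ * X) = ∑ j, quadForm X (colVec S j) := by
  rw [Matrix.mul_assoc, Matrix.trace_mul_comm, Matrix.trace]
  simp only [Matrix.diag_apply, Matrix.mul_apply, Matrix.transpose_apply, quadForm, colVec]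
  refine Finset.sum_congr rfl fun j _ => ?_
  rw [Finset.sum_comm]
  conv_rhs => rw [Finset.sum_comm]
  rw [Finset.sum_comm]
  refine Finset.sum_congr rfl fun i _ => ?_
  rw [Finset.sum_mul]
  refine Finset.sum_congr rfl fun k _ => ?_
  ring

theorem trace_le {n r : ℕ} (S S' : Matrix (Fin n) (Fin r) ℝ) (Q Z : Matrix (Fin n) (Fin n) ℝ)
    {c : ℝ} (h : ∀ a b, quadForm Q a ≤ quadForm Z b + c * ‖a - b‖ ^ 2) :
    Matrix.trace (S * Sᵀ * Q) ≤ Matrix.trace (S' * S'ᵀ * Z) + c * mnorm (S - S') ^ 2 := by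
  have e : mnorm (S - S') ^ 2 = ∑ j, ‖colVec S j - colVec S' j‖ ^ 2 := by
    unfold mnorm
    rw [Real.sq_sqrt (by positivity), Finset.sum_comm]
    refine Finset.sum_congr rfl fun j _ => ?_
    rw [EuclideanSpace.real_norm_sq_eq]
    simp [colVec]
  rw [trace_eq, trace_eq, e, Finset.mul_sum, ← Finset.sum_add_distrib]
  exact Finset.sum_le_sum fun j _ => h _ _

theorem inner_colVec {n r : ℕ} (S : Matrix (Fin n) (Fin r) ℝ) (g : EuclideanSpace ℝ (Fin n))
    (j : Fin r) : ⟪g, colVec S j⟫_ℝ = sigmaT S g j := by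
  rw [inner_eq_sum]
  simp only [colVec, sigmaT, Matrix.mulVec, dotProduct, Matrix.transpose_apply]
  refine Finset.sum_congr rfl fun i _ => ?_
  ring

theorem trace_rankOne {n r : ℕ} (S : Matrix (Fin n) (Fin r) ℝ) (g : EuclideanSpace ℝ (Fin n)) :
    Matrix.trace (S * Sᵀ * rankOne g) =
      ∑ j, sigmaT S g j ^ 2 := by
  rw [trace_eq]
  refine Finset.sum_congr rfl fun j _ => ?_
  rw [quadForm_rankOne, inner_colVec]

/-- `S e` as a vector. -/
def sApp {n r : ℕ} (S : Matrix (Fin n) (Fin r) ℝ) (e : Fin r → ℝ) : EuclideanSpace ℝ (Fin n) :=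
  WithLp.toLp 2 (Matrix.mulVec S e)

theorem inner_sApp {n r : ℕ} (S : Matrix (Fin n) (Fin r) ℝ) (e : Fin r → ℝ)
    (g : EuclideanSpace ℝ (Fin n)) : ⟪g, sApp S e⟫_ℝ = ∑ j, sigmaT S g j * e j := by
  rw [inner_eq_sum]
  simp only [sApp, sigmaT, Matrix.mulVec, dotProduct, Matrix.transpose_apply, Finset.mul_sum,
    Finset.sum_mul]
  rw [Finset.sum_comm]
  refine Finset.sum_congr rfl fun i _ => Finset.sum_congr rfl fun j _ => ?_
  ring

theorem norm_sApp_le {n r : ℕ} (S : Matrix (Fin n) (Fin r) ℝ) (e : Fin r → ℝ) :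
    ‖sApp S e‖ ≤ mnorm S * Real.sqrt (∑ j, e j ^ 2) := by
  refine abs_le_of_sq_le_sq' ?_ (by unfold mnorm; positivity) |>.2
  rw [mul_pow, mnorm, Real.sq_sqrt (by positivity), Real.sq_sqrt (by positivity),
    EuclideanSpace.real_norm_sq_eq, Finset.sum_mul]
  refine Finset.sum_le_sum fun i _ => ?_
  simp only [sApp, Matrix.mulVec, dotProduct]
  exact Finset.sum_mul_sq_le_sq_mul_sq _ _ _

theorem sApp_sub {n r : ℕ} (S S' : Matrix (Fin n) (Fin r) ℝ) (e : Fin r → ℝ) :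
    sApp (S - S') e = sApp S e - sApp S' e := by
  ext i
  simp [sApp, Matrix.sub_mulVec]

end Matrices

section LogTrunc

/-- truncated logarithm -/
def hlog (ρ t : ℝ) : ℝ := Real.log (max t ρ) + (min t ρ ^ 2 - ρ ^ 2) / (2 * ρ ^ 2)

theorem hlog_eq {ρ t : ℝ} (h : ρ ≤ t) : hlog ρ t = Real.log t := by
  simp [hlog, max_eq_left h, min_eq_right h]

theorem hlog_cont {ρ : ℝ} (hρ : 0 < ρ) : Continuous (hlog ρ) := by
  unfold hlog
  refine Continuous.add (Continuous.log (by fun_prop) fun t => ?_) (by fun_prop)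
  exact (lt_of_lt_of_le hρ (le_max_right _ _)).ne'

theorem hlog_tangent {ρ t t0 : ℝ} (hρ : 0 < ρ) (ht : 0 ≤ t) (ht0 : 0 ≤ t0) :
    hlog ρ t ≤ hlog ρ t0 + (t ^ 2 - t0 ^ 2) / (2 * max t0 ρ ^ 2) := by
  unfold hlog
  have hT : 0 < max t ρ := lt_of_lt_of_le hρ (le_max_right _ _)
  have hT0 : 0 < max t0 ρ := lt_of_lt_of_le hρ (le_max_right _ _)
  have hid : ∀ s : ℝ, s ^ 2 = max s ρ ^ 2 + min s ρ ^ 2 - ρ ^ 2 := by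
    intro s
    rcases le_total s ρ with h | h
    · rw [max_eq_right h, min_eq_left h]; ring
    · rw [max_eq_left h, min_eq_right h]; ring
  have hlog1 : Real.log (max t ρ) ≤ Real.log (max t0 ρ) +
      (max t ρ ^ 2 - max t0 ρ ^ 2) / (2 * max t0 ρ ^ 2) := by
    have h1 := Real.log_le_sub_one_of_pos (x := max t ρ ^ 2 / max t0 ρ ^ 2) (by positivity)
    rw [Real.log_div (by positivity) (by positivity), Real.log_pow, Real.log_pow] at h1
    push_cast at h1
    have e : (max t ρ ^ 2 - max t0 ρ ^ 2) / (2 * max t0 ρ ^ 2) =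
      (max t ρ ^ 2 / max t0 ρ ^ 2 - 1) / 2 := by field_simp
    rw [e]; linarith
  have h2 : (min t ρ ^ 2 - min t0 ρ ^ 2) / (2 * ρ ^ 2) ≤
      (min t ρ ^ 2 - min t0 ρ ^ 2) / (2 * max t0 ρ ^ 2) := by
    rcases le_total t0 ρ with h | h
    · rw [max_eq_right h]
    · rw [min_eq_right h]
      have : min t ρ ^ 2 - ρ ^ 2 ≤ 0 := by
        have h3 : 0 ≤ min t ρ := le_min ht hρ.le
        have h4 : min t ρ ≤ ρ := min_le_right _ _
        nlinarith
      rw [div_le_div_iff₀ (by positivity) (by positivity)]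
      have h5 : ρ ≤ max t0 ρ := le_max_right _ _
      have h6 : 2 * ρ ^ 2 ≤ 2 * max t0 ρ ^ 2 := by gcongr
      exact mul_le_mul_of_nonpos_left h6 this
  rw [hid t, hid t0]
  have e2 : (max t ρ ^ 2 + min t ρ ^ 2 - ρ ^ 2 - (max t0 ρ ^ 2 + min t0 ρ ^ 2 - ρ ^ 2))
      / (2 * max t0 ρ ^ 2) = (max t ρ ^ 2 - max t0 ρ ^ 2) / (2 * max t0 ρ ^ 2) +
      (min t ρ ^ 2 - min t0 ρ ^ 2) / (2 * max t0 ρ ^ 2) := by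
    rw [← add_div]; congr 1; ring
  have e3 : (min t ρ ^ 2 - min t0 ρ ^ 2) / (2 * ρ ^ 2) = (min t ρ ^ 2 - ρ ^ 2) / (2 * ρ ^ 2)
      - (min t0 ρ ^ 2 - ρ ^ 2) / (2 * ρ ^ 2) := by
    rw [← sub_div]; congr 1; ring
  rw [e2]
  linarith

theorem hlog_para {n : ℕ} (Ω : Set (EuclideanSpace ℝ (Fin n))) (hne : (frontier Ω).Nonempty)
    {ρ ε C : ℝ} (hρ : 0 < ρ) (hε : 0 < ε) (hC : ε / ρ ^ 2 ≤ C) :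
    ParaAbove (fun y => ε * hlog ρ (bdist Ω y)) (ε / ρ) C := by
  intro w
  obtain ⟨z, hz, hzd⟩ := isClosed_frontier.exists_infDist_eq_dist hne w
  set T := max (bdist Ω w) ρ with hT
  have hTρ : ρ ≤ T := le_max_right _ _
  have hT0 : 0 < T := lt_of_lt_of_le hρ hTρ
  have hdw : bdist Ω w = ‖w - z‖ := by rw [← dist_eq_norm]; exact hzd
  have hdT : ‖w - z‖ ≤ T := by rw [← hdw]; exact le_max_left _ _
  refine ⟨(ε / T ^ 2) • (w - z), ?_, fun y => ?_⟩
  · rw [norm_smul, Real.norm_eq_abs, abs_of_pos (by positivity)]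
    calc ε / T ^ 2 * ‖w - z‖ ≤ ε / T ^ 2 * T := by gcongr
      _ = ε / T := by field_simp
      _ ≤ ε / ρ := by gcongr
  · have h1 := hlog_tangent (t := bdist Ω y) (t0 := bdist Ω w) hρ Metric.infDist_nonneg
      Metric.infDist_nonneg
    have h2 : bdist Ω y ≤ ‖y - z‖ := by
      rw [← dist_eq_norm]; exact Metric.infDist_le_dist_of_mem hz
    have h3 : bdist Ω y ^ 2 ≤ ‖y - z‖ ^ 2 := by
      have : 0 ≤ bdist Ω y := Metric.infDist_nonneg
      gcongr
    have e : y - z = (w - z) + (y - w) := by abel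
    rw [e, norm_add_sq_real] at h3
    have h4 : (bdist Ω y ^ 2 - bdist Ω w ^ 2) / (2 * T ^ 2) ≤
        (2 * ⟪w - z, y - w⟫_ℝ + ‖y - w‖ ^ 2) / (2 * T ^ 2) := by
      gcongr
      rw [hdw]; linarith
    have h5 : ε * hlog ρ (bdist Ω y) ≤ ε * (hlog ρ (bdist Ω w) +
        (2 * ⟪w - z, y - w⟫_ℝ + ‖y - w‖ ^ 2) / (2 * T ^ 2)) := by
      gcongr; linarith
    have h6 : ε / T ^ 2 ≤ C := le_trans (by gcongr) hC
    have h7 : ε / T ^ 2 / 2 * ‖y - w‖ ^ 2 ≤ C / 2 * ‖y - w‖ ^ 2 := by gcongr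
    rw [real_inner_smul_left]
    refine h5.trans ?_
    have e2 : ε * (hlog ρ (bdist Ω w) + (2 * ⟪w - z, y - w⟫_ℝ + ‖y - w‖ ^ 2) / (2 * T ^ 2)) =
      ε * hlog ρ (bdist Ω w) + ε / T ^ 2 * ⟪w - z, y - w⟫_ℝ + ε / T ^ 2 / 2 * ‖y - w‖ ^ 2 := by
      field_simp; ring
    linarith

end LogTrunc
section ExpJet

theorem exp_cubic {s : ℝ} (hs : |s| ≤ 1) : Real.exp s ≤ 1 + s + s ^ 2 / 2 + |s| ^ 3 := by
  have h := Real.exp_bound hs (n := 3) (by norm_num)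
  have h2 := (abs_le.1 h).2
  simp [Finset.sum_range_succ, Nat.factorial] at h2
  have h3 : 0 ≤ |s| ^ 3 := by positivity
  norm_num at h2
  linarith

set_option maxHeartbeats 1000000 in
theorem exp_jet {n : ℕ} (S : Set (EuclideanSpace ℝ (Fin n))) (d u : EuclideanSpace ℝ (Fin n) → ℝ)
    (y g : EuclideanSpace ℝ (Fin n)) (Q : Matrix (Fin n) (Fin n) ℝ) (hQ : Q.IsSymm) {ε ρ0 : ℝ}
    (hε : 0 < ε) (hρ0 : 0 < ρ0)
    (hd : ∀ h, ‖h‖ < ρ0 → 0 < d (y + h) ∧ u (y + h) = ε * Real.log (d (y + h)))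
    (hu : ∀ τ > (0 : ℝ), ∃ ρ > (0 : ℝ), ∀ h, ‖h‖ < ρ →
      u (y + h) ≤ u y + ⟪g, h⟫_ℝ + 1 / 2 * quadForm Q h + τ * ‖h‖ ^ 2) :
    ((d y / ε) • g, (d y / ε) • Q + (d y / ε ^ 2) • rankOne g) ∈ J2plus S d y := by
  have h0 := hd 0 (by simpa using hρ0)
  rw [add_zero] at h0
  obtain ⟨hD, huy⟩ := h0
  set D := d y with hDdef
  refine ⟨?_, fun τ hτ => ?_⟩
  · have : (rankOne g).IsSymm := by
      ext i j; simp [rankOne, mul_comm]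
    exact (hQ.smul _).add (this.smul _)
  obtain ⟨kQ, hkQ, hkQb⟩ := quadForm_bound Q
  obtain ⟨ρ1, hρ1, H⟩ := hu (τ * ε / (2 * D)) (by positivity)
  set τ1 := τ * ε / (2 * D) with hτ1
  have hτ1p : 0 < τ1 := by positivity
  set a0 := ‖g‖ / ε with ha0
  set k2 := (kQ / 2 + τ1) / ε with hk2
  have ha0p : 0 ≤ a0 := by positivity
  have hk2p : 0 ≤ k2 := by positivity
  set K := (2 * a0 * k2 + k2 ^ 2) / 2 + (a0 + k2) ^ 3 with hK
  have hKp : 0 ≤ K := by positivity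
  set η := min (min ρ0 ρ1) (min 1 (min (1 / (a0 + k2 + 1)) (τ / (2 * (D * K + 1))))) with hη
  have hηp : 0 < η := by positivity
  have hev : ∀ᶠ w in nhdsWithin y S, ‖w - y‖ < η := by
    apply mem_nhdsWithin_of_mem_nhds
    have := Metric.ball_mem_nhds y hηp
    filter_upwards [this] with w hw
    rwa [Metric.mem_ball, dist_eq_norm] at hw
  filter_upwards [hev] with w hw
  set h := w - y with hh
  have hwy : w = y + h := by rw [hh]; abel
  simp only [hη, lt_min_iff] at hw
  obtain ⟨⟨hw0, hw1⟩, hw2, hw3, hw4⟩ := hw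
  obtain ⟨hdp, hue⟩ := hd h hw0
  have H1 := H h hw1
  rw [quadForm_add, quadForm_smul, quadForm_smul, quadForm_rankOne, real_inner_smul_left, hwy]
  rw [hue, huy] at H1
  set t := ‖h‖ with ht
  have ht0 : 0 ≤ t := norm_nonneg _
  set a := ⟪g, h⟫_ℝ / ε with ha
  set q := (1 / 2 * quadForm Q h + τ1 * t ^ 2) / ε with hq
  have haA : |a| ≤ a0 * t := by
    rw [ha, abs_div, abs_of_pos hε, ha0, div_mul_eq_mul_div]
    refine div_le_div_of_nonneg_right ?_ hε.le
    exact abs_real_inner_le_norm _ _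
  have hqA : |q| ≤ k2 * t ^ 2 := by
    rw [hq, abs_div, abs_of_pos hε, hk2, div_mul_eq_mul_div (kQ / 2 + τ1)]
    refine div_le_div_of_nonneg_right ?_ hε.le
    have h1 := hkQb h
    refine (abs_add_le _ _).trans ?_
    rw [abs_mul, abs_of_pos (show (0:ℝ) < 1 / 2 by norm_num), abs_of_nonneg (by positivity : 0 ≤ τ1 * t ^ 2)]
    linarith
  have hlog : Real.log (d (y + h)) ≤ Real.log D + (a + q) := by
    have : ε * (Real.log D + (a + q)) = ε * Real.log D + ⟪g, h⟫_ℝ + 1 / 2 * quadForm Q h + τ1 * t ^ 2 := by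
      rw [ha, hq]; field_simp; ring
    rw [← this] at H1
    exact le_of_mul_le_mul_left H1 hε
  have hdle : d (y + h) ≤ D * Real.exp (a + q) := by
    have h1 := Real.exp_le_exp.2 hlog
    rwa [Real.exp_add, Real.exp_log hD, Real.exp_log hdp] at h1
  have ht2 : t ^ 2 ≤ t := by nlinarith
  have hs : |a + q| ≤ (a0 + k2) * t := by
    refine (abs_add_le _ _).trans ?_
    have : k2 * t ^ 2 ≤ k2 * t := by gcongr
    linarith
  have hs1 : |a + q| ≤ 1 := by
    refine hs.trans ?_
    rw [lt_div_iff₀ (by positivity)] at hw3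
    nlinarith
  have hexp := exp_cubic hs1
  have hs3 : |a + q| ^ 3 ≤ (a0 + k2) ^ 3 * t ^ 3 := by
    rw [← mul_pow]; gcongr
  have haq : a * q ≤ a0 * k2 * t ^ 3 := by
    calc a * q ≤ |a * q| := le_abs_self _
      _ = |a| * |q| := abs_mul _ _
      _ ≤ (a0 * t) * (k2 * t ^ 2) := by gcongr
      _ = _ := by ring
  have hq2 : q ^ 2 ≤ k2 ^ 2 * t ^ 3 := by
    calc q ^ 2 = |q| ^ 2 := (sq_abs _).symm
      _ ≤ (k2 * t ^ 2) ^ 2 := by gcongr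
      _ = k2 ^ 2 * (t ^ 3 * t) := by ring
      _ ≤ k2 ^ 2 * (t ^ 3 * 1) := by gcongr
      _ = _ := by ring
  have hfin : Real.exp (a + q) ≤ 1 + a + q + a ^ 2 / 2 + K * t ^ 3 := by
    refine hexp.trans ?_
    have e1 : (a + q) ^ 2 = a ^ 2 + 2 * (a * q) + q ^ 2 := by ring
    have e2 : K * t ^ 3 = a0 * k2 * t ^ 3 + k2 ^ 2 * t ^ 3 / 2 + (a0 + k2) ^ 3 * t ^ 3 := by
      rw [hK]; ring
    rw [e1, e2]
    linarith
  have hsmall : D * K * t ≤ τ / 2 := by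
    rw [lt_div_iff₀ (by positivity)] at hw4
    have : 0 ≤ D * K := by positivity
    nlinarith
  have h9 : D * K * t ^ 3 ≤ τ / 2 * t ^ 2 := by
    calc D * K * t ^ 3 = (D * K * t) * t ^ 2 := by ring
      _ ≤ _ := by gcongr
  have h10 : d (y + h) ≤ D * (1 + a + q + a ^ 2 / 2 + K * t ^ 3) := hdle.trans (by gcongr)
  have e1 : D * (1 + a + q + a ^ 2 / 2 + K * t ^ 3) = D + D / ε * ⟪g, h⟫_ℝ + 1 / 2 *
      (D / ε * quadForm Q h + D / ε ^ 2 * ⟪g, h⟫_ℝ ^ 2) + τ / 2 * t ^ 2 + D * K * t ^ 3 := by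
    rw [ha, hq, hτ1]; field_simp; ring
  linarith

end ExpJet

section DistFacts

variable {n : ℕ} {Ω : Set (EuclideanSpace ℝ (Fin n))}

theorem bdist_nonneg (x : EuclideanSpace ℝ (Fin n)) : 0 ≤ bdist Ω x := Metric.infDist_nonneg

theorem bdist_cont : Continuous (bdist Ω) := Metric.continuous_infDist_pt _

theorem bdist_lip (x y : EuclideanSpace ℝ (Fin n)) : bdist Ω x ≤ bdist Ω y + ‖x - y‖ := by
  rw [← dist_eq_norm]; exact Metric.infDist_le_infDist_add_dist

theorem bdist_pos (hΩ : IsOpen Ω) (hne : (frontier Ω).Nonempty) {x} (hx : x ∈ Ω) :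
    0 < bdist Ω x := by
  refine (isClosed_frontier.notMem_iff_infDist_pos hne).1 ?_
  rw [hΩ.frontier_eq]
  exact fun h => h.2 hx

theorem mem_of_bdist_pos {x : EuclideanSpace ℝ (Fin n)} (hx : x ∈ closure Ω) (h : 0 < bdist Ω x) :
    x ∈ Ω := by
  by_contra hc
  have : x ∈ frontier Ω := ⟨hx, fun h' => hc (interior_subset h')⟩
  have := Metric.infDist_zero_of_mem this
  unfold bdist at h
  linarith

theorem mem_of_near (hΩ : IsOpen Ω) {x y : EuclideanSpace ℝ (Fin n)} (hx : x ∈ Ω)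
    (h : ‖y - x‖ < bdist Ω x) : y ∈ Ω := by
  have hc : IsPreconnected (Metric.ball x (bdist Ω x)) :=
    (convex_ball x _).isPreconnected
  have hxb : x ∈ Metric.ball x (bdist Ω x) := Metric.mem_ball_self (lt_of_le_of_lt (norm_nonneg _) h)
  have hyb : y ∈ Metric.ball x (bdist Ω x) := by rwa [Metric.mem_ball, dist_eq_norm]
  by_contra hy
  have hdisj : ∃ z ∈ Metric.ball x (bdist Ω x), z ∈ frontier Ω := by
    by_contra hcon
    push Not at hcon
    have hyc : y ∈ (closure Ω)ᶜ := fun h' =>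
      hcon y hyb ⟨h', fun h'' => hy (interior_subset h'')⟩
    obtain ⟨z, _, hz1, hz2⟩ := hc Ω (closure Ω)ᶜ hΩ isClosed_closure.isOpen_compl
      (fun z hz => by
        by_cases hzc : z ∈ closure Ω
        · left
          by_contra hzn
          exact hcon z hz ⟨hzc, fun h'' => hzn (interior_subset h'')⟩
        · right; exact hzc) ⟨x, hxb, hx⟩ ⟨y, hyb, hyc⟩
    exact hz2 (subset_closure hz1)
  obtain ⟨z, hz1, hz2⟩ := hdisj
  have h1 : bdist Ω x ≤ dist x z := Metric.infDist_le_dist_of_mem hz2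
  rw [Metric.mem_ball, dist_comm] at hz1
  linarith

end DistFacts
section SigmaLemma

variable {n r : ℕ} {Ω : Set (EuclideanSpace ℝ (Fin n))}

theorem norm_add_le_inner {E : Type*} [NormedAddCommGroup E] [InnerProductSpace ℝ E] (w k : E) (hw : 0 < ‖w‖) :
    ‖w + k‖ ≤ ‖w‖ + ⟪‖w‖⁻¹ • w, k⟫_ℝ + ‖k‖ ^ 2 / (2 * ‖w‖) := by
  have h1 : ‖w‖ * (‖w‖ + ⟪‖w‖⁻¹ • w, k⟫_ℝ + ‖k‖ ^ 2 / (2 * ‖w‖)) =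
      ‖w‖ ^ 2 + ⟪w, k⟫_ℝ + ‖k‖ ^ 2 / 2 := by
    rw [real_inner_smul_left]; field_simp
  have h2 : ‖w + k‖ ^ 2 = ‖w‖ ^ 2 + 2 * ⟪w, k⟫_ℝ + ‖k‖ ^ 2 := norm_add_sq_real w k
  have h3 : ‖w‖ * ‖w + k‖ ≤ ‖w‖ * (‖w‖ + ⟪‖w‖⁻¹ • w, k⟫_ℝ + ‖k‖ ^ 2 / (2 * ‖w‖)) := by
    rw [h1]; nlinarith [sq_nonneg (‖w‖ - ‖w + k‖)]
  exact le_of_mul_le_mul_left h3 hw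

/-- the normal component of sigma is controlled by the distance -/
theorem sigma_bound (hΩo : IsOpen Ω) (hne : (frontier Ω).Nonempty)
    (s : EuclideanSpace ℝ (Fin n) → Matrix (Fin n) (Fin r) ℝ) {B : ℝ} (hB : 0 < B)
    (hLip : ∀ x ∈ closure Ω, ∀ y ∈ closure Ω, mnorm (s x - s y) ≤ B * ‖x - y‖)
    (hperp : ∀ w ∈ frontier Ω, ∀ ν ∈ normalDirs Ω w, sigmaT (s w) ν = 0)
    {y p : EuclideanSpace ℝ (Fin n)} {Y : Matrix (Fin n) (Fin n) ℝ} (hy : y ∈ Ω)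
    (hj : (p, Y) ∈ J2plus (closure Ω) (bdist Ω) y) :
    ∑ j, sigmaT (s y) p j ^ 2 ≤ (B * bdist Ω y) ^ 2 := by
  set D := bdist Ω y with hD
  have hDp : 0 < D := bdist_pos hΩo hne hy
  set e := sigmaT (s y) p with he
  set N := Real.sqrt (∑ j, e j ^ 2) with hN
  have hN2 : N ^ 2 = ∑ j, e j ^ 2 := Real.sq_sqrt (by positivity)
  have hN0 : 0 ≤ N := Real.sqrt_nonneg _
  rw [← hN2]
  set k := sApp (s y) e with hk
  have hpk : ⟪p, k⟫_ℝ = N ^ 2 := by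
    rw [hk, inner_sApp, hN2]
    exact Finset.sum_congr rfl fun j _ => (sq _).symm
  suffices hmain : N ^ 2 ≤ B * D * N by
    have : N ≤ B * D := by
      rcases hN0.eq_or_lt with h0 | h0
      · rw [← h0]; positivity
      · exact le_of_mul_le_mul_right (by linarith) h0
    gcongr
  obtain ⟨kY, hkY, hkYb⟩ := quadForm_bound Y
  have hjet := hj.2 1 one_pos
  rw [eventually_iff, Metric.mem_nhdsWithin_iff] at hjet
  obtain ⟨η, hη, hjet⟩ := hjet
  set c := ‖k‖ with hc
  have hc0 : 0 ≤ c := norm_nonneg _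
  set G := (1 + kY / 2) * c ^ 2 + 2 * B * c * N + c ^ 2 / D with hG
  have hG0 : 0 ≤ G := by positivity
  have key : ∀ t : ℝ, 0 < t → t * (c + 1) < η → t * (c + 1) < D / 2 → N ^ 2 ≤ B * D * N + G * t := by
    intro t ht ht1 ht2
    have htc : t * c < t * (c + 1) := by nlinarith
    set y' := y - t • k with hy'
    have hn1 : ‖y' - y‖ = t * c := by
      rw [hy', sub_sub_cancel_left, norm_neg, norm_smul, Real.norm_eq_abs, abs_of_pos ht]
    have hy'Ω : y' ∈ Ω := mem_of_near hΩo hy (by rw [hn1]; linarith)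
    have h1 := hjet (show y' ∈ Metric.ball y η ∩ closure Ω from
      ⟨by rw [Metric.mem_ball, dist_eq_norm, hn1]; linarith, subset_closure hy'Ω⟩)
    simp only [Set.mem_ofPred_eq] at h1
    rw [hn1] at h1
    have hyy : y' - y = -(t • k) := by rw [hy']; abel
    have hin : ⟪p, y' - y⟫_ℝ = -(t * N ^ 2) := by
      rw [hyy, inner_neg_right, real_inner_smul_right, hpk]
    have hqb := (abs_le.1 (hkYb (y' - y))).2
    rw [hn1] at hqb
    rw [hin] at h1
    obtain ⟨z, hz, hzd⟩ := isClosed_frontier.exists_infDist_eq_dist hne y'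
    have hzd' : bdist Ω y' = ‖y' - z‖ := by rw [← dist_eq_norm]; exact hzd
    set w := y' - z with hw
    have hwlow : D / 2 ≤ ‖w‖ := by
      rw [← hzd']
      have := bdist_lip (Ω := Ω) y y'
      rw [norm_sub_rev, hn1] at this
      linarith
    have hwp : 0 < ‖w‖ := by linarith
    have hwup : ‖w‖ ≤ D + t * c := by
      rw [← hzd']
      have := bdist_lip (Ω := Ω) y' y
      rwa [hn1] at this
    set ν := ‖w‖⁻¹ • w with hν
    have hνn : ‖ν‖ = 1 := by
      rw [hν, norm_smul, norm_inv, norm_norm, inv_mul_cancel₀ hwp.ne']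
    have hνmem : ν ∈ normalDirs Ω z := by
      refine ⟨hνn, y', hy'Ω, ?_⟩
      rw [hzd', hν, smul_smul, mul_inv_cancel₀ hwp.ne', one_smul, hw]; abel
    have hperp' := hperp z hz ν hνmem
    have hDle : D ≤ ‖w + t • k‖ := by
      have e1 : w + t • k = y - z := by rw [hw, hy']; abel
      rw [e1, ← dist_eq_norm]
      exact Metric.infDist_le_dist_of_mem hz
    have h2 := norm_add_le_inner w (t • k) hwp
    rw [real_inner_smul_right, norm_smul, Real.norm_eq_abs, abs_of_pos ht] at h2
    have hyz : ‖y - z‖ ≤ D + 2 * (t * c) := by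
      have e1 : y - z = w + (y - y') := by rw [hw]; abel
      rw [e1]
      refine (norm_add_le _ _).trans ?_
      rw [norm_sub_rev y y', hn1]; linarith
    have hνk : ⟪ν, k⟫_ℝ ≤ B * (D + 2 * (t * c)) * N := by
      have e1 : ⟪ν, sApp (s z) e⟫_ℝ = 0 := by
        rw [inner_sApp, hperp']; simp
      have e2 : ⟪ν, k⟫_ℝ = ⟪ν, sApp (s y - s z) e⟫_ℝ := by
        rw [sApp_sub, inner_sub_right, e1, sub_zero]
      rw [e2]
      refine (real_inner_le_norm _ _).trans ?_
      rw [hνn, one_mul]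
      refine (norm_sApp_le _ _).trans ?_
      have h3 := hLip y (subset_closure hy) z (frontier_subset_closure hz)
      rw [← hN]
      gcongr
      exact h3.trans (by gcongr)
    have hdiv : (t * ‖k‖) ^ 2 / (2 * ‖w‖) ≤ t ^ 2 * (c ^ 2 / D) := by
      rw [← mul_div_assoc, ← mul_pow]
      gcongr
      linarith
    rw [hzd'] at h1
    have h5 : t * ⟪ν, k⟫_ℝ ≤ t * (B * (D + 2 * (t * c)) * N) := by gcongr
    have h6 : t * N ^ 2 ≤ t * (B * D * N + G * t) := by
      have e3 : t * (B * D * N + G * t) = t * (B * (D + 2 * (t * c)) * N) + t ^ 2 * (c ^ 2 / D)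
        + (1 + kY / 2) * (t * c) ^ 2 := by rw [hG]; ring
      rw [e3]
      nlinarith
    exact le_of_mul_le_mul_left h6 ht
  refine le_of_forall_pos_le_add fun τ hτ => ?_
  set t := min (min (η / (2 * (c + 1))) (D / (4 * (c + 1)))) (τ / (G + 1)) with ht
  have htp : 0 < t := by positivity
  have h1 : t ≤ η / (2 * (c + 1)) := (min_le_left _ _).trans (min_le_left _ _)
  have h2 : t ≤ D / (4 * (c + 1)) := (min_le_left _ _).trans (min_le_right _ _)
  have h3 : t ≤ τ / (G + 1) := min_le_right _ _
  rw [le_div_iff₀ (by positivity)] at h1 h2 h3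
  have := key t htp (by linarith) (by linarith)
  nlinarith

end SigmaLemma

section Uniform

variable {n m r : ℕ} {Ω : Set (EuclideanSpace ℝ (Fin n))}

theorem uniform_near (hΩbdd : Bornology.IsBounded Ω) (hne : (frontier Ω).Nonempty)
    (P : EuclideanSpace ℝ (Fin n) → ℝ → Prop)
    (hmono : ∀ x k k', k' ≤ k → P x k → P x k')
    (hcond : ∀ z ∈ frontier Ω, ∃ U : Set (EuclideanSpace ℝ (Fin n)),
      IsOpen U ∧ z ∈ U ∧ ∃ k > (0 : ℝ), ∀ x ∈ Ω ∩ U, P x k) :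
    ∃ δ > (0 : ℝ), ∃ k > (0 : ℝ), ∀ x ∈ Ω, bdist Ω x < δ → P x k := by
  have hcomp : IsCompact (frontier Ω) :=
    hΩbdd.closure.isCompact_closure.of_isClosed_subset isClosed_frontier
      (by rw [closure_closure]; exact frontier_subset_closure)
  have hQ : ∃ V : Set (EuclideanSpace ℝ (Fin n)), IsOpen V ∧ frontier Ω ⊆ V ∧
      ∃ k > (0 : ℝ), ∀ x ∈ Ω ∩ V, P x k := by
    refine hcomp.induction_on (p := fun S => ∃ V : Set (EuclideanSpace ℝ (Fin n)), IsOpen V ∧ S ⊆ V ∧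
      ∃ k > (0 : ℝ), ∀ x ∈ Ω ∩ V, P x k) ?_ ?_ ?_ ?_
    · exact ⟨∅, isOpen_empty, le_rfl, 1, one_pos, fun x hx => hx.2.elim⟩
    · rintro S T hST ⟨V, hV, hTV, h⟩
      exact ⟨V, hV, hST.trans hTV, h⟩
    · rintro S T ⟨V, hV, hSV, k, hk, h⟩ ⟨V', hV', hTV, k', hk', h'⟩
      refine ⟨V ∪ V', hV.union hV', Set.union_subset_union hSV hTV, min k k', lt_min hk hk', ?_⟩
      rintro x ⟨hx, hx' | hx'⟩
      · exact hmono x _ _ (min_le_left _ _) (h x ⟨hx, hx'⟩)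
      · exact hmono x _ _ (min_le_right _ _) (h' x ⟨hx, hx'⟩)
    · intro z hz
      obtain ⟨U, hU, hzU, k, hk, h⟩ := hcond z hz
      exact ⟨U, mem_nhdsWithin_of_mem_nhds (hU.mem_nhds hzU), U, hU, le_rfl, k, hk, h⟩
  obtain ⟨V, hV, hfV, k, hk, h⟩ := hQ
  obtain ⟨δ, hδ, hth⟩ := hcomp.exists_thickening_subset_open hV hfV
  refine ⟨δ, hδ, k, hk, fun x hx hd => h x ⟨hx, hth ?_⟩⟩
  exact (Metric.mem_thickening_iff_infDist_lt hne).2 hd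

end Uniform
section Main

variable {n m r : ℕ} {Ω : Set (EuclideanSpace ℝ (Fin n))}

set_option maxHeartbeats 1000000 in
theorem no_interior_min (hΩo : IsOpen Ω) (hΩbdd : Bornology.IsBounded Ω)
    (hne : (frontier Ω).Nonempty)
    (A : Set (Fin m → ℝ)) (hAne : A.Nonempty)
    (b : EuclideanSpace ℝ (Fin n) → (Fin m → ℝ) → EuclideanSpace ℝ (Fin n))
    (σ : EuclideanSpace ℝ (Fin n) → (Fin m → ℝ) → Matrix (Fin n) (Fin r) ℝ)
    (hbBdd : ∃ C, ∀ x ∈ closure Ω, ∀ α ∈ A, ‖b x α‖ ≤ C)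
    (B : ℝ) (hB : 0 < B)
    (hbLip : ∀ x ∈ closure Ω, ∀ y ∈ closure Ω, ∀ α ∈ A, ‖b x α - b y α‖ ≤ B * ‖x - y‖)
    (hσLip : ∀ x ∈ closure Ω, ∀ y ∈ closure Ω, ∀ α ∈ A,
      mnorm (σ x α - σ y α) ≤ B * ‖x - y‖)
    (hperp : ∀ w ∈ frontier Ω, ∀ α ∈ A, ∀ ν ∈ normalDirs Ω w, sigmaT (σ w α) ν = 0)
    {δ k : ℝ} (hδk : 2 * δ * (2 * B ^ 2) ≤ k)
    (hsub : ∀ x ∈ Ω, bdist Ω x < 2 * δ → ∀ α ∈ A, ∀ pY ∈ J2plus (closure Ω) (bdist Ω) x,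
          -⟪b x α, pY.1⟫_ℝ - Matrix.trace (σ x α * (σ x α)ᵀ * pY.2) ≤ -k)
    (v : EuclideanSpace ℝ (Fin n) → ℝ) (hv : LowerSemicontinuousOn v Ω)
    (hvsuper : ∀ x ∈ Ω, ∀ qZ ∈ J2minus Ω v x, 0 ≤ Fop A b σ x qZ.1 qZ.2)
    {ε ρ c : ℝ} (hε : 0 < ε) (hρ : 0 < ρ) (hρδ : 2 * ρ < δ)
    {x1 : EuclideanSpace ℝ (Fin n)} (hx1 : x1 ∈ Ω) (hx1l : 2 * ρ ≤ bdist Ω x1)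
    (hx1u : bdist Ω x1 ≤ δ) (hx1c : v x1 - ε * Real.log (bdist Ω x1) < c)
    (hbd : ∀ x ∈ Ω, bdist Ω x = 2 * ρ ∨ bdist Ω x = δ → c ≤ v x - ε * Real.log (bdist Ω x)) :
    False := by
  obtain ⟨Cb, hCb⟩ := hbBdd
  obtain ⟨R, hR0, hR⟩ : ∃ R > (0 : ℝ), ∀ x ∈ closure Ω, ‖x1 - x‖ ≤ R := by
    obtain ⟨R, hR⟩ := hΩbdd.closure.subset_closedBall x1
    refine ⟨|R| + 1, by positivity, fun x hx => ?_⟩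
    have := hR hx
    rw [Metric.mem_closedBall, dist_comm, dist_eq_norm] at this
    linarith [le_abs_self R]
  set L := ε / ρ with hL
  have hLp : 0 < L := by positivity
  set γ := c - (v x1 - ε * Real.log (bdist Ω x1)) with hγ
  have hγp : 0 < γ := by linarith
  set Mb := |Cb| + 1 with hMb
  have hMbp : 0 < Mb := by positivity
  set s := min 1 (min (γ / (4 * (R + ρ))) (ε * B ^ 2 / (4 * Mb))) with hs
  have hsp : 0 < s := by positivity
  have hs1 : s ≤ 1 := min_le_left _ _
  have hs2 : s * (R + ρ) ≤ γ / 4 := by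
    have : s ≤ γ / (4 * (R + ρ)) := (min_le_right _ _).trans (min_le_left _ _)
    rw [le_div_iff₀ (by positivity)] at this
    linarith
  have hs3 : s * Mb ≤ ε * B ^ 2 / 4 := by
    have : s ≤ ε * B ^ 2 / (4 * Mb) := (min_le_right _ _).trans (min_le_right _ _)
    rw [le_div_iff₀ (by positivity)] at this
    linarith
  set M := 6 * L + 1 with hM
  have hMp : 0 < M := by positivity
  set C := ε / ρ ^ 2 + 1 + M / ρ + 8 * L * M / γ + 16 * L * M / (ε * B) + 16 * M ^ 2 / ε with hC
  have p1 : 0 < ε / ρ ^ 2 := by positivity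
  have p2 : 0 < M / ρ := by positivity
  have p3 : 0 < 8 * L * M / γ := by positivity
  have p4 : 0 < 16 * L * M / (ε * B) := by positivity
  have p5 : 0 < 16 * M ^ 2 / ε := by positivity
  have hCp : 0 < C := by linarith
  set T := M / C with hT
  have hTp : 0 < T := by positivity
  have hT1 : T ≤ ρ := by
    have : M / ρ ≤ C := by linarith
    rw [div_le_iff₀ hρ] at this
    rw [hT, div_le_iff₀ hCp]; linarith
  have hT2 : 2 * L * T ≤ γ / 4 := by
    have : 8 * L * M / γ ≤ C := by linarith
    rw [div_le_iff₀ hγp] at this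
    rw [hT, mul_div_assoc', div_le_iff₀ hCp]; linarith
  have hT3 : 4 * B * L * T ≤ ε * B ^ 2 / 4 := by
    have : 16 * L * M / (ε * B) ≤ C := by linarith
    rw [div_le_iff₀ (by positivity)] at this
    rw [hT, mul_div_assoc', div_le_iff₀ hCp]
    have h2 := mul_le_mul_of_nonneg_right this hB.le
    nlinarith
  have hT4 : 4 * C * (B * T) ^ 2 ≤ ε * B ^ 2 / 4 := by
    have : 16 * M ^ 2 / ε ≤ C := by linarith
    rw [div_le_iff₀ hε] at this
    have e : 4 * C * (B * T) ^ 2 = B ^ 2 * (4 * M ^ 2 / C) := by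
      rw [hT]; field_simp
    rw [e]
    have : 4 * M ^ 2 / C ≤ ε / 4 := by
      rw [div_le_iff₀ hCp]; linarith
    have h2 := mul_le_mul_of_nonneg_left this (sq_nonneg B)
    linarith
  -- the compact annulus
  set K := closure Ω ∩ {x | 2 * ρ ≤ bdist Ω x ∧ bdist Ω x ≤ δ} with hK
  have hKc : IsCompact K := by
    refine hΩbdd.isCompact_closure.inter_right ?_
    exact (isClosed_le continuous_const bdist_cont).inter (isClosed_le bdist_cont continuous_const)
  have hKΩ : K ⊆ Ω := fun x hx => mem_of_bdist_pos hx.1 (by have := hx.2.1; linarith)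
  have hx1K : x1 ∈ K := ⟨subset_closure hx1, hx1l, hx1u⟩
  set u : EuclideanSpace ℝ (Fin n) → ℝ := fun y => ε * hlog ρ (bdist Ω y) with hu
  have hueq : ∀ y, ρ ≤ bdist Ω y → u y = ε * Real.log (bdist Ω y) := fun y hy => by
    simp only [hu]; rw [hlog_eq hy]
  have hucont : Continuous u := continuous_const.mul ((hlog_cont hρ).comp bdist_cont)
  have hP0 : ParaAbove u L (ε / ρ ^ 2) := hlog_para Ω hne hρ hε le_rfl
  have hP : ParaAbove u L C := hlog_para Ω hne hρ hε (by linarith)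
  obtain ⟨p, x, ξ, y, Z, Q, hp, hξ, hxy, hξx, hmax, hZs, hQs, hvj, huj, hZQ⟩ :=
    core_jets hLp.le hCp hsp hucont hP hKc ⟨x1, hx1K⟩ (hv.mono hKΩ)
  have hξΩ : ξ ∈ Ω := hKΩ hξ
  have hξxT : ‖ξ - x‖ ≤ T := by
    refine hξx.trans ?_
    rw [hT]; gcongr; linarith
  have hyξ : ‖y - ξ‖ ≤ T := by
    have e : y - ξ = -(x - y) + -(ξ - x) := by abel
    rw [e]
    refine (norm_add_le _ _).trans ?_
    rw [norm_neg, norm_neg]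
    refine (add_le_add hxy hξx).trans ?_
    rw [← add_div, hT]
    gcongr; linarith
  -- maximality
  have huy : u y ≤ u ξ + 2 * L * T := by
    obtain ⟨a, ha, hab⟩ := hP0 ξ
    have h1 := hab y
    have h2 : ⟪a, y - ξ⟫_ℝ ≤ L * T := by
      refine (real_inner_le_norm _ _).trans ?_
      gcongr
    have h3 : ε / ρ ^ 2 / 2 * ‖y - ξ‖ ^ 2 ≤ L * T := by
      calc ε / ρ ^ 2 / 2 * ‖y - ξ‖ ^ 2 ≤ ε / ρ ^ 2 / 2 * T ^ 2 := by gcongr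
        _ = ε / ρ ^ 2 / 2 * (T * T) := by ring
        _ ≤ ε / ρ ^ 2 / 2 * (ρ * T) := by gcongr
        _ = L * T / 2 := by rw [hL]; field_simp
        _ ≤ L * T := by have : 0 < L * T := by positivity
                        linarith
    linarith
  have hξlow : v ξ - ε * Real.log (bdist Ω ξ) < c := by
    have h1 := hmax x1 hx1K
    have h2 : ⟪p, x1⟫_ℝ - ⟪p, x⟫_ℝ ≤ s * (R + ρ) := by
      rw [← inner_sub_right]
      refine (real_inner_le_norm _ _).trans ?_
      have e : x1 - x = (x1 - ξ) + (ξ - x) := by abel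
      have h3 : ‖x1 - x‖ ≤ R + ρ := by
        rw [e]
        refine (norm_add_le _ _).trans ?_
        linarith [hR ξ (subset_closure hξΩ)]
      gcongr
    rw [hueq x1 (by linarith)] at h1
    rw [hueq ξ (by linarith [hξ.2.1])] at huy
    linarith
  have hξl : 2 * ρ < bdist Ω ξ := by
    refine lt_of_le_of_ne hξ.2.1 fun h => ?_
    have := hbd ξ hξΩ (Or.inl h.symm)
    linarith
  have hξu : bdist Ω ξ < δ := by
    refine lt_of_le_of_ne hξ.2.2 fun h => ?_
    have := hbd ξ hξΩ (Or.inr h)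
    linarith
  have hyΩ : y ∈ Ω := mem_of_near hΩo hξΩ (by linarith)
  have hyl : ρ < bdist Ω y := by
    have := bdist_lip (Ω := Ω) ξ y
    rw [norm_sub_rev] at this
    linarith
  have hyu : bdist Ω y < 2 * δ := by
    have := bdist_lip (Ω := Ω) y ξ
    linarith
  set q := (2 * C) • (y - x) with hq
  have hqn : ‖q‖ ≤ 4 * L := by
    rw [hq, norm_smul, Real.norm_eq_abs, abs_of_pos (by positivity), norm_sub_rev]
    rw [le_div_iff₀ hCp] at hxy
    linarith
  -- the subjet
  have hsubjet : (q - p, Z) ∈ J2minus Ω v ξ := by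
    refine ⟨?_, fun τ hτ => ?_⟩
    · exact hZs.neg
    · obtain ⟨ρ1, hρ1, H⟩ := hvj τ hτ
      have hN : ∀ᶠ w in nhds ξ, 2 * ρ < bdist Ω w ∧ bdist Ω w < δ :=
        ((bdist_cont.tendsto ξ).eventually_const_lt hξl).and
          ((bdist_cont.tendsto ξ).eventually_lt_const hξu)
      have h1 : ∀ᶠ w in nhdsWithin ξ Ω, 2 * ρ < bdist Ω w ∧ bdist Ω w < δ :=
        hN.filter_mono nhdsWithin_le_nhds
      have h2 : Metric.ball ξ ρ1 ∈ nhdsWithin ξ Ω :=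
        mem_nhdsWithin_of_mem_nhds (Metric.ball_mem_nhds ξ hρ1)
      filter_upwards [h1, h2, self_mem_nhdsWithin] with w hw1 hw2 hw3
      have hw : ξ + (w - ξ) = w := by abel
      rw [Metric.mem_ball, dist_eq_norm] at hw2
      have h3 := H (w - ξ) hw2 (by rw [hw]; exact ⟨subset_closure hw3, hw1.1.le, hw1.2.le⟩)
      rw [hw] at h3
      simp only [quadForm_neg, inner_neg_left]
      linarith
  have hF := hvsuper ξ hξΩ _ hsubjet
  have hτp : 0 < ε * B ^ 2 / 4 := by positivity
  obtain ⟨_, ⟨α, hα, rfl⟩, hval⟩ := exists_lt_of_lt_csSup (hAne.image _)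
    (lt_of_lt_of_le (neg_neg_of_pos hτp) hF)
  simp only at hval
  -- the superjet of the distance
  obtain ⟨ρ0, hρ0, hρ0b⟩ := Metric.eventually_nhds_iff.1
    ((bdist_cont.tendsto y).eventually_const_lt hyl)
  have hsuperjet := exp_jet (closure Ω) (bdist Ω) u y q Q hQs hε hρ0 (fun h hh => by
    have : ρ < bdist Ω (y + h) := hρ0b (by rw [dist_eq_norm]; simpa using hh)
    exact ⟨by linarith, hueq _ this.le⟩) huj
  set D := bdist Ω y with hD
  have hDp : 0 < D := by linarith
  have hd1 := hsub y hyΩ hyu α hα _ hsuperjet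
  have hd2 := sigma_bound hΩo hne (fun x => σ x α) hB (fun x hx y hy => hσLip x hx y hy α hα)
    (fun w hw ν hν => hperp w hw α hα ν hν) hyΩ hsuperjet
  simp only [real_inner_smul_right, Matrix.mul_add, Matrix.mul_smul, Matrix.trace_add,
    Matrix.trace_smul, smul_eq_mul, trace_rankOne] at hd1
  have hsm : ∀ j, sigmaT (σ y α) ((D / ε) • q) j = D / ε * sigmaT (σ y α) q j := by
    intro j
    rw [← inner_colVec, ← inner_colVec, real_inner_smul_left]
  simp only [hsm, mul_pow, ← Finset.mul_sum] at hd2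
  set sig2 := ∑ j, sigmaT (σ y α) q j ^ 2 with hsig
  have hsigb : sig2 ≤ ε ^ 2 * B ^ 2 := by
    rw [← hD, div_pow, div_mul_eq_mul_div, div_le_iff₀ (by positivity)] at hd2
    have : D ^ 2 * sig2 ≤ D ^ 2 * (ε ^ 2 * B ^ 2) := by linarith
    exact le_of_mul_le_mul_left this (by positivity)
  set tQ := Matrix.trace (σ y α * (σ y α)ᵀ * Q) with htQ
  set bq := ⟪b y α, q⟫_ℝ with hbq
  have hbase : -bq - tQ ≤ -(ε * B ^ 2) := by
    have h1 : D * (-bq - tQ) ≤ D * (-(ε * B ^ 2)) := by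
      have e1 : -(D / ε * bq) - (D / ε * tQ + D / ε ^ 2 * sig2) =
        (D * (-bq - tQ) - D * sig2 / ε) / ε := by field_simp; ring
      rw [e1, div_le_iff₀ hε] at hd1
      have h2 : D * sig2 / ε ≤ D * (ε * B ^ 2) := by
        rw [div_le_iff₀ hε]
        calc D * sig2 ≤ D * (ε ^ 2 * B ^ 2) := by gcongr
          _ = _ := by ring
      have h3 : D * (2 * B ^ 2) ≤ k := by
        refine le_trans ?_ hδk
        gcongr
      have h4 : D * (2 * B ^ 2) * ε ≤ k * ε := by gcongr
      linarith
    exact le_of_mul_le_mul_left h1 hDp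
  have htr := trace_le (σ y α) (σ ξ α) Q Z hZQ
  have hsl : mnorm (σ y α - σ ξ α) ≤ B * T :=
    (hσLip y (subset_closure hyΩ) ξ (subset_closure hξΩ) α hα).trans (by gcongr)
  have hmn : 0 ≤ mnorm (σ y α - σ ξ α) := Real.sqrt_nonneg _
  have htr2 : 4 * C * mnorm (σ y α - σ ξ α) ^ 2 ≤ 4 * C * (B * T) ^ 2 := by gcongr
  have hb1 : bq - ⟪b ξ α, q⟫_ℝ ≤ 4 * B * L * T := by
    rw [hbq, ← inner_sub_left]
    refine (real_inner_le_norm _ _).trans ?_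
    calc ‖b y α - b ξ α‖ * ‖q‖ ≤ (B * T) * (4 * L) := by
          gcongr
          exact (hbLip y (subset_closure hyΩ) ξ (subset_closure hξΩ) α hα).trans (by gcongr)
      _ = _ := by ring
  have hb2 : ⟪b ξ α, p⟫_ℝ ≤ s * Mb := by
    refine (real_inner_le_norm _ _).trans ?_
    rw [mul_comm]
    gcongr
    linarith [hCb ξ (subset_closure hξΩ) α hα, le_abs_self Cb]
  rw [inner_sub_right] at hval
  linarith

end Main

theorem statement_10
    {n m r : ℕ} (Ω : Set (EuclideanSpace ℝ (Fin n)))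
    (hΩo : IsOpen Ω) (hΩconn : IsConnected Ω) (hΩbdd : Bornology.IsBounded Ω)
    (A : Set (Fin m → ℝ)) (hA : IsClosed A) (hAne : A.Nonempty)
    (b : EuclideanSpace ℝ (Fin n) → (Fin m → ℝ) → EuclideanSpace ℝ (Fin n))
    (σ : EuclideanSpace ℝ (Fin n) → (Fin m → ℝ) → Matrix (Fin n) (Fin r) ℝ)
    (hbBdd : ∃ C, ∀ x ∈ closure Ω, ∀ α ∈ A, ‖b x α‖ ≤ C)
    (hσBdd : ∃ C, ∀ x ∈ closure Ω, ∀ α ∈ A, mnorm (σ x α) ≤ C)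
    (hbCont : ContinuousOn (fun q : EuclideanSpace ℝ (Fin n) × (Fin m → ℝ) => b q.1 q.2)
      (closure Ω ×ˢ A))
    (hσCont : ContinuousOn (fun q : EuclideanSpace ℝ (Fin n) × (Fin m → ℝ) => σ q.1 q.2)
      (closure Ω ×ˢ A))
    (B : ℝ) (hB : 0 < B)
    (hbLip : ∀ x ∈ closure Ω, ∀ y ∈ closure Ω, ∀ α ∈ A, ‖b x α - b y α‖ ≤ B * ‖x - y‖)
    (hσLip : ∀ x ∈ closure Ω, ∀ y ∈ closure Ω, ∀ α ∈ A,
      mnorm (σ x α - σ y α) ≤ B * ‖x - y‖)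
    (hcond : ∀ z ∈ frontier Ω, ∃ U : Set (EuclideanSpace ℝ (Fin n)),
      IsOpen U ∧ z ∈ U ∧ ∃ k > (0 : ℝ), ∀ α ∈ A,
        (∀ x ∈ Ω ∩ U, ∀ pY ∈ J2plus (closure Ω) (bdist Ω) x,
          -⟪b x α, pY.1⟫_ℝ - Matrix.trace (σ x α * (σ x α)ᵀ * pY.2) ≤ -k) ∧
        (∀ w ∈ frontier Ω ∩ U, ∀ ν ∈ normalDirs Ω w, sigmaT (σ w α) ν = 0))
    (hSMinP : ∀ w : EuclideanSpace ℝ (Fin n) → ℝ, LowerSemicontinuousOn w Ω →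
      (∀ x ∈ Ω, ∀ qZ ∈ J2minus Ω w x, 0 ≤ Fop A b σ x qZ.1 qZ.2) →
      (∃ x₀ ∈ Ω, ∀ x ∈ Ω, w x₀ ≤ w x) → ∀ x ∈ Ω, ∀ y ∈ Ω, w x = w y)
    (v : EuclideanSpace ℝ (Fin n) → ℝ) (hv : LowerSemicontinuousOn v Ω)
    (hvsuper : ∀ x ∈ Ω, ∀ qZ ∈ J2minus Ω v x, 0 ≤ Fop A b σ x qZ.1 qZ.2)
    (hgrowth : ∀ ε > (0 : ℝ), ∃ δ, 0 < δ ∧ δ < 1 ∧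
      ∀ x ∈ Ω, bdist Ω x < δ → -(ε * (-Real.log (bdist Ω x))) ≤ v x) :
    ∀ x ∈ Ω, ∀ y ∈ Ω, v x = v y := by
  rcases Nat.eq_zero_or_pos n with hn | hn
  · subst hn
    intro x _ y _
    rw [Subsingleton.elim x y]
  have : Nonempty (Fin n) := ⟨⟨0, hn⟩⟩
  have hne : (frontier Ω).Nonempty := by
    rw [nonempty_frontier_iff]
    refine ⟨hΩconn.nonempty, fun h => ?_⟩
    rw [h] at hΩbdd
    exact (NormedSpace.noncompactSpace ℝ (EuclideanSpace ℝ (Fin n))).noncompact_univ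
      (by simpa using hΩbdd.isCompact_closure)
  have hperp : ∀ w ∈ frontier Ω, ∀ α ∈ A, ∀ ν ∈ normalDirs Ω w, sigmaT (σ w α) ν = 0 := by
    intro w hw α hα
    obtain ⟨U, _, hwU, k, _, h⟩ := hcond w hw
    exact (h α hα).2 w ⟨hw, hwU⟩
  obtain ⟨δ0, hδ0, k, hk, hsub⟩ := uniform_near hΩbdd hne
    (fun x k => ∀ α ∈ A, ∀ pY ∈ J2plus (closure Ω) (bdist Ω) x,
          -⟪b x α, pY.1⟫_ℝ - Matrix.trace (σ x α * (σ x α)ᵀ * pY.2) ≤ -k)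
    (fun x k k' hkk h α hα pY hpY => (h α hα pY hpY).trans (by linarith))
    (fun z hz => by
      obtain ⟨U, hU, hzU, k, hk, h⟩ := hcond z hz
      exact ⟨U, hU, hzU, k, hk, fun x hx α hα => (h α hα).1 x hx⟩)
  obtain ⟨xs, hxs⟩ := hΩconn.nonempty
  have hxsp := bdist_pos hΩo hne hxs
  set δ := min (min (δ0 / 2) (bdist Ω xs)) (k / (4 * B ^ 2)) with hδ
  have hδp : 0 < δ := by positivity
  have hδ1 : 2 * δ ≤ δ0 := by
    have : δ ≤ δ0 / 2 := (min_le_left _ _).trans (min_le_left _ _)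
    linarith
  have hδ2 : δ ≤ bdist Ω xs := (min_le_left _ _).trans (min_le_right _ _)
  have hδk : 2 * δ * (2 * B ^ 2) ≤ k := by
    have : δ ≤ k / (4 * B ^ 2) := min_le_right _ _
    rw [le_div_iff₀ (by positivity)] at this
    linarith
  set K := closure Ω ∩ {x | δ ≤ bdist Ω x} with hK
  have hKc : IsCompact K :=
    hΩbdd.isCompact_closure.inter_right (isClosed_le continuous_const bdist_cont)
  have hKΩ : K ⊆ Ω := fun x hx => mem_of_bdist_pos hx.1 (lt_of_lt_of_le hδp hx.2)
  have hKne : K.Nonempty := ⟨xs, subset_closure hxs, hδ2⟩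
  obtain ⟨x0, hx0, hmin⟩ := (hv.mono hKΩ).exists_isMinOn hKne hKc
  refine hSMinP v hv hvsuper ⟨x0, hKΩ hx0, fun x1 hx1 => ?_⟩
  by_contra hlt
  rw [not_le] at hlt
  have hd1 : bdist Ω x1 < δ := by
    by_contra h
    rw [not_lt] at h
    have : v x0 ≤ v x1 := hmin ⟨subset_closure hx1, h⟩
    linarith
  have hd1p := bdist_pos hΩo hne hx1
  have hlogd := Real.log_lt_log hd1p hd1
  set l := Real.log δ - Real.log (bdist Ω x1) with hl
  have hlp : 0 < l := by linarith
  set ε := (v x0 - v x1) / (2 * l) with hε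
  have hεp : 0 < ε := div_pos (by linarith) (by positivity)
  have hεl : ε * l = (v x0 - v x1) / 2 := by rw [hε]; field_simp
  set c := v x0 - ε * Real.log δ with hc
  obtain ⟨δ1, hδ1p, _, hg⟩ := hgrowth (ε / 2) (by positivity)
  set κ := min (min δ1 (bdist Ω x1)) (Real.exp (-(2 * c / ε))) with hκ
  have hκp : 0 < κ := by positivity
  set ρ := κ / 4 with hρ
  have hρp : 0 < ρ := by positivity
  have h1 : κ ≤ δ1 := (min_le_left _ _).trans (min_le_left _ _)
  have h2 : κ ≤ bdist Ω x1 := (min_le_left _ _).trans (min_le_right _ _)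
  have h3 : κ ≤ Real.exp (-(2 * c / ε)) := min_le_right _ _
  refine no_interior_min hΩo hΩbdd hne A hAne b σ hbBdd B hB hbLip hσLip hperp hδk
    (fun x hx hxd => hsub x hx (by linarith)) v hv hvsuper (c := c) hεp hρp (by linarith) hx1
    (by linarith) hd1.le ?_ ?_
  · have : ε * l = ε * Real.log δ - ε * Real.log (bdist Ω x1) := by rw [hl]; ring
    linarith
  · rintro x hx (hxd | hxd)
    · have h4 := hg x hx (by linarith)
      have h5 : Real.log (bdist Ω x) ≤ -(2 * c / ε) := by
        rw [Real.log_le_iff_le_exp (by linarith)]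
        linarith
      have h6 := mul_le_mul_of_nonneg_left h5 (by positivity : 0 ≤ ε / 2)
      have e : ε / 2 * -(2 * c / ε) = -c := by field_simp
      rw [e] at h6
      linarith
    · have : v x0 ≤ v x := hmin ⟨subset_closure hx, hxd.ge⟩
      rw [hxd]
      linarith
end
end

section
/- Let Ω ⊂ ℝⁿ be a bounded connected open set whose signed distance function d is C² on a neighborhood of ∂Ω. Assume condition (reg22), condition (reg2) (β-Hölder continuity of σ with β ∈ (1/2,1]), condition (irrelevant), and that F satisfies the Strong Maximum Principle in Ω. If u : Ω → ℝ is upper semicontinuous, is a viscosity subsolution of F[u]=0 in Ω, and there exists κ > 0 with limsup_{x→∂Ω} u(x) d(x)^κ ≤ 0, then u is constant. -/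
open scoped InnerProductSpace Matrix
open Filter

noncomputable section

theorem quadForm_eq {n : ℕ} (X : Matrix (Fin n) (Fin n) ℝ) (w : EuclideanSpace ℝ (Fin n)) :
    quadForm X w = ⟪LinearMap.toContinuousLinearMap (Matrix.toEuclideanLin X) w, w⟫_ℝ := by
  simp only [quadForm, LinearMap.coe_toContinuousLinearMap', Matrix.toLpLin_apply,
    PiLp.inner_apply, Matrix.mulVec, dotProduct, RCLike.inner_apply, conj_trivial]
  refine Finset.sum_congr rfl fun i _ => ?_
  rw [Finset.mul_sum]
  refine Finset.sum_congr rfl fun j _ => ?_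
  ring

theorem jet_symm {n : ℕ} {v : EuclideanSpace ℝ (Fin n) → ℝ}
    {G : EuclideanSpace ℝ (Fin n) → EuclideanSpace ℝ (Fin n)}
    {X : Matrix (Fin n) (Fin n) ℝ} {x : EuclideanSpace ℝ (Fin n)}
    (hG : ∀ᶠ y in nhds x, HasGradientAt v (G y) y)
    (hX : HasFDerivAt G (LinearMap.toContinuousLinearMap (Matrix.toEuclideanLin X)) x) :
    ∀ w z, ⟪LinearMap.toContinuousLinearMap (Matrix.toEuclideanLin X) w, z⟫_ℝ =
      ⟪LinearMap.toContinuousLinearMap (Matrix.toEuclideanLin X) z, w⟫_ℝ := by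
  intro w z
  have h1 : ∀ᶠ y in nhds x, HasFDerivAt v (innerSL ℝ (G y)) y := by
    filter_upwards [hG] with y hy
    exact hy.hasFDerivAt
  have h2 := (innerSL ℝ (E := EuclideanSpace ℝ (Fin n))).hasFDerivAt.comp x hX
  exact second_derivative_symmetric_of_eventually_of_real h1 h2 w z

theorem jet_isSymm {n : ℕ} {v : EuclideanSpace ℝ (Fin n) → ℝ}
    {G : EuclideanSpace ℝ (Fin n) → EuclideanSpace ℝ (Fin n)}
    {X : Matrix (Fin n) (Fin n) ℝ} {x : EuclideanSpace ℝ (Fin n)}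
    (hG : ∀ᶠ y in nhds x, HasGradientAt v (G y) y)
    (hX : HasFDerivAt G (LinearMap.toContinuousLinearMap (Matrix.toEuclideanLin X)) x) :
    X.IsSymm := by
  ext i j
  have := jet_symm hG hX (EuclideanSpace.single i 1) (EuclideanSpace.single j 1)
  simpa [Matrix.toLpLin_apply, EuclideanSpace.inner_single_right] using this

theorem jet_taylor {n : ℕ} {v : EuclideanSpace ℝ (Fin n) → ℝ}
    {G : EuclideanSpace ℝ (Fin n) → EuclideanSpace ℝ (Fin n)}
    {X : Matrix (Fin n) (Fin n) ℝ} {x : EuclideanSpace ℝ (Fin n)}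
    (hG : ∀ᶠ y in nhds x, HasGradientAt v (G y) y)
    (hX : HasFDerivAt G (LinearMap.toContinuousLinearMap (Matrix.toEuclideanLin X)) x)
    (ε : ℝ) (hε : 0 < ε) : ∀ᶠ y in nhds x,
      v y - v x - ⟪G x, y - x⟫_ℝ - (1 / 2) * quadForm X (y - x) ≤ ε * ‖y - x‖ ^ 2 := by
  have hs := jet_symm hG hX
  simp only [quadForm_eq]
  set L := LinearMap.toContinuousLinearMap (Matrix.toEuclideanLin X) with hL
  have ho := (hasFDerivAt_iff_isLittleO.1 hX).def hε
  obtain ⟨ρ, hρ, hball⟩ := Metric.eventually_nhds_iff_ball.1 (hG.and ho)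
  filter_upwards [Metric.ball_mem_nhds x hρ] with y hy
  let g : EuclideanSpace ℝ (Fin n) → ℝ := fun y =>
    v y - v x - ⟪G x, y - x⟫_ℝ - (1 / 2) * ⟪L (y - x), y - x⟫_ℝ
  have hsub : ∀ z ∈ segment ℝ x y, ‖z - x‖ ≤ ‖y - x‖ := by
    rintro z hz
    rw [segment_eq_image'] at hz
    obtain ⟨t, ht, rfl⟩ := hz
    simp only [add_sub_cancel_left, norm_smul, Real.norm_eq_abs, abs_of_nonneg ht.1]
    exact mul_le_of_le_one_left (norm_nonneg _) ht.2
  have hder : ∀ z ∈ segment ℝ x y,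
      HasFDerivWithinAt g (innerSL ℝ (G z - G x - L (z - x))) (segment ℝ x y) z := by
    intro z hz
    have hzb : z ∈ Metric.ball x ρ := by
      rw [mem_ball_iff_norm] at hy ⊢
      exact (hsub z hz).trans_lt hy
    have h1 : HasFDerivAt v (innerSL ℝ (G z)) z := (hball z hzb).1.hasFDerivAt
    have hid : HasFDerivAt (fun y : EuclideanSpace ℝ (Fin n) => y - x)
      (ContinuousLinearMap.id ℝ _) z := (hasFDerivAt_id z).sub_const x
    have h2 : HasFDerivAt (fun y => ⟪G x, y - x⟫_ℝ) (innerSL ℝ (G x)) z := by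
      have := (innerSL ℝ (G x)).hasFDerivAt.comp z hid
      refine HasFDerivAt.congr_fderiv this ?_
      ext w
      simp
    have h3 := (L.hasFDerivAt.comp z hid).inner ℝ hid
    have h4 := ((h1.sub_const (v x)).sub h2).sub (h3.const_mul (1 / 2))
    have h5 := h4.hasFDerivWithinAt (s := segment ℝ x y)
    refine h5.congr_fderiv ?_
    ext w
    have := hs w (z - x)
    simp [inner_sub_left, real_inner_comm] at this ⊢
    linarith
  have hmv := (convex_segment x y).norm_image_sub_le_of_norm_hasFDerivWithin_le
    (C := ε * ‖y - x‖) hder (by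
      intro z hz
      rw [innerSL_apply_norm]
      have hzb : z ∈ Metric.ball x ρ := by
        rw [mem_ball_iff_norm] at hy ⊢
        exact (hsub z hz).trans_lt hy
      exact (hball z hzb).2.trans (mul_le_mul_of_nonneg_left (hsub z hz) hε.le))
    (left_mem_segment ℝ x y) (right_mem_segment ℝ x y)
  have hg0 : g x = 0 := by simp [g]
  rw [hg0, sub_zero, Real.norm_eq_abs] at hmv
  have := (le_abs_self _).trans hmv
  calc _ = g y := rfl
    _ ≤ _ := this
    _ = _ := by ring

theorem barrier_grad {n : ℕ} {d : EuclideanSpace ℝ (Fin n) → ℝ}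
    {p x : EuclideanSpace ℝ (Fin n)} (s : ℝ) (hd : HasGradientAt d p x) (hx : 0 < d x) :
    HasGradientAt (fun y => d y ^ s) ((s * d x ^ (s - 1)) • p) x := by
  have h := (Real.hasDerivAt_rpow_const (p := s) (Or.inl hx.ne')).comp_hasFDerivAt x hd.hasFDerivAt
  rw [hasGradientAt_iff_hasFDerivAt]
  refine h.congr_fderiv ?_
  simp

theorem barrier_hess {n : ℕ} {d : EuclideanSpace ℝ (Fin n) → ℝ}
    {Dd : EuclideanSpace ℝ (Fin n) → EuclideanSpace ℝ (Fin n)}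
    {X : Matrix (Fin n) (Fin n) ℝ}
    {x : EuclideanSpace ℝ (Fin n)} (c s : ℝ) (hd : HasGradientAt d (Dd x) x) (hx : 0 < d x)
    (hX : HasFDerivAt Dd (LinearMap.toContinuousLinearMap (Matrix.toEuclideanLin X)) x) :
    HasFDerivAt (fun y => (c * d y ^ s) • Dd y)
      (LinearMap.toContinuousLinearMap (Matrix.toEuclideanLin
        ((c * d x ^ s) • X +
          (c * (s * d x ^ (s - 1))) • Matrix.vecMulVec (fun i => Dd x i) (fun i => Dd x i)))) x := by
  have h := ((barrier_grad s hd hx).hasFDerivAt.const_mul c).smul hX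
  refine h.congr_fderiv ?_
  ext w i
  simp [Matrix.toLpLin_apply, Matrix.vecMulVec_mulVec, PiLp.inner_apply, dotProduct, mul_comm]
  ring_nf

theorem trace_vec {n r : ℕ} (M : Matrix (Fin n) (Fin r) ℝ) (v : EuclideanSpace ℝ (Fin n)) :
    Matrix.trace (M * Mᵀ * Matrix.vecMulVec (fun i => v i) (fun i => v i)) =
      ∑ j, sigmaT M v j ^ 2 := by
  rw [Matrix.mul_assoc, Matrix.trace_mul_comm, Matrix.mul_vecMulVec, Matrix.vecMulVec_mul,
    Matrix.trace_vecMulVec]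
  simp only [dotProduct, sigmaT, Matrix.mulVec_transpose, sq]

theorem sigmaT_bound {n r : ℕ} (M : Matrix (Fin n) (Fin r) ℝ) (v : EuclideanSpace ℝ (Fin n)) :
    ∑ j, sigmaT M v j ^ 2 ≤ mnorm M ^ 2 * ‖v‖ ^ 2 := by
  rw [mnorm, Real.sq_sqrt (by positivity), EuclideanSpace.norm_sq_eq, Finset.sum_comm,
    Finset.sum_mul]
  refine Finset.sum_le_sum fun j _ => ?_
  simpa [sigmaT, Matrix.mulVec, dotProduct] using
    Finset.sum_mul_sq_le_sq_mul_sq Finset.univ (fun i => M i j) (fun i => v i)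

theorem entry_le {n r : ℕ} (M : Matrix (Fin n) (Fin r) ℝ) (i : Fin n) (j : Fin r) :
    |M i j| ≤ mnorm M := by
  rw [mnorm]
  apply Real.abs_le_sqrt
  calc M i j ^ 2 ≤ ∑ j, M i j ^ 2 :=
        Finset.single_le_sum (f := fun j => M i j ^ 2) (fun _ _ => sq_nonneg _) (Finset.mem_univ j)
    _ ≤ _ := Finset.single_le_sum (f := fun i => ∑ j, M i j ^ 2)
        (fun _ _ => Finset.sum_nonneg fun _ _ => sq_nonneg _) (Finset.mem_univ i)

theorem le_Fop {n m r : ℕ} {A : Set (Fin m → ℝ)}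
    {b : EuclideanSpace ℝ (Fin n) → (Fin m → ℝ) → EuclideanSpace ℝ (Fin n)}
    {σ : EuclideanSpace ℝ (Fin n) → (Fin m → ℝ) → Matrix (Fin n) (Fin r) ℝ}
    {x : EuclideanSpace ℝ (Fin n)}
    (hb : ∃ C, ∀ α ∈ A, ‖b x α‖ ≤ C) (hσ : ∃ C, ∀ α ∈ A, mnorm (σ x α) ≤ C)
    (p : EuclideanSpace ℝ (Fin n)) (X : Matrix (Fin n) (Fin n) ℝ) {α : Fin m → ℝ} (hα : α ∈ A) :
    -⟪b x α, p⟫_ℝ - Matrix.trace (σ x α * (σ x α)ᵀ * X) ≤ Fop A b σ x p X := by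
  obtain ⟨C, hC⟩ := hb
  obtain ⟨K, hK⟩ := hσ
  refine le_csSup ?_ ⟨α, hα, rfl⟩
  refine ⟨C * ‖p‖ + ∑ i, ∑ j, (∑ k : Fin r, K * K) * |X j i|, ?_⟩
  rintro _ ⟨a, ha, rfl⟩
  have h1 : -⟪b x a, p⟫_ℝ ≤ C * ‖p‖ :=
    (neg_le_abs _).trans ((abs_real_inner_le_norm _ _).trans
      (mul_le_mul_of_nonneg_right (hC a ha) (norm_nonneg _)))
  have h2 : |Matrix.trace (σ x a * (σ x a)ᵀ * X)| ≤
      ∑ i, ∑ j, (∑ k : Fin r, K * K) * |X j i| := by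
    simp only [Matrix.trace, Matrix.diag_apply, Matrix.mul_apply, Matrix.transpose_apply]
    refine (Finset.abs_sum_le_sum_abs _ _).trans (Finset.sum_le_sum fun i _ => ?_)
    refine (Finset.abs_sum_le_sum_abs _ _).trans (Finset.sum_le_sum fun j _ => ?_)
    rw [abs_mul]
    refine mul_le_mul_of_nonneg_right ?_ (abs_nonneg _)
    refine (Finset.abs_sum_le_sum_abs _ _).trans (Finset.sum_le_sum fun k _ => ?_)
    rw [abs_mul]
    have e1 := (entry_le (σ x a) i k).trans (hK a ha)
    have e2 := (entry_le (σ x a) j k).trans (hK a ha)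
    exact mul_le_mul e1 e2 (abs_nonneg _) ((abs_nonneg _).trans e1)
  have := neg_abs_le (Matrix.trace (σ x a * (σ x a)ᵀ * X))
  simp only
  linarith

theorem sdist_of_mem {n : ℕ} {Ω : Set (EuclideanSpace ℝ (Fin n))} {x : EuclideanSpace ℝ (Fin n)}
    (hx : x ∈ closure Ω) : sdist Ω x = Metric.infDist x Ωᶜ := by
  simp [sdist, Metric.infDist_zero_of_mem hx]

/-- The projection onto the boundary and invariance of the gradient along the normal. -/
theorem exists_proj {n : ℕ} {Ω : Set (EuclideanSpace ℝ (Fin n))} (hΩo : IsOpen Ω)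
    (hne : (Ωᶜ).Nonempty) {δ₀ : ℝ} (hδ₀ : 0 < δ₀)
    {Dd : EuclideanSpace ℝ (Fin n) → EuclideanSpace ℝ (Fin n)}
    (hDd : ∀ x, |sdist Ω x| < δ₀ → HasGradientAt (sdist Ω) (Dd x) x)
    (hDdnorm : ∀ x, |sdist Ω x| < δ₀ → ‖Dd x‖ = 1)
    {x : EuclideanSpace ℝ (Fin n)} (hx : x ∈ Ω) (hxδ : |sdist Ω x| < δ₀) :
    ∃ z ∈ frontier Ω, dist x z = sdist Ω x ∧ Dd x = Dd z := by
  obtain ⟨z, hz, hdz⟩ := hΩo.isClosed_compl.exists_infDist_eq_dist hne x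
  have hsx : sdist Ω x = dist x z := by rw [sdist_of_mem (subset_closure hx), hdz]
  have hcb : Metric.closedBall x (dist x z) ⊆ closure Ω := by
    rw [← hdz]; exact Metric.closedBall_infDist_compl_subset_closure hx
  have hzc : z ∈ closure Ω := hcb (by simp [dist_comm])
  have hzf : z ∈ frontier Ω := by
    rw [hΩo.frontier_eq]; exact ⟨hzc, hz⟩
  refine ⟨z, hzf, hsx.symm, ?_⟩
  have hsz : sdist Ω z = 0 := by rw [sdist_of_mem hzc, Metric.infDist_zero_of_mem hz]
  have hzδ : |sdist Ω z| < δ₀ := by simpa [hsz] using hδ₀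
  have hxz : x ≠ z := fun h => hz (h ▸ hx)
  -- along the segment
  have hseg : ∀ t ∈ Set.Icc (0 : ℝ) 1, sdist Ω (x + t • (z - x)) = (1 - t) * dist x z := by
    intro t ht
    have h1 : dist x (x + t • (z - x)) = t * dist x z := by
      rw [dist_self_add_right, norm_smul, Real.norm_eq_abs, abs_of_nonneg ht.1, dist_comm,
        dist_eq_norm]
    have h2 : dist (x + t • (z - x)) z = (1 - t) * dist x z := by
      rw [dist_eq_norm, dist_eq_norm, ← abs_of_nonneg (sub_nonneg.2 ht.2), ← Real.norm_eq_abs,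
        ← norm_smul]
      congr 1; module
    have hm : x + t • (z - x) ∈ closure Ω := hcb (by
      rw [Metric.mem_closedBall, dist_comm, h1]
      exact mul_le_of_le_one_left dist_nonneg ht.2)
    rw [sdist_of_mem hm]
    apply le_antisymm
    · rw [← h2]; exact Metric.infDist_le_dist_of_mem hz
    · have := Metric.infDist_le_infDist_add_dist (s := Ωᶜ) (x := x) (y := x + t • (z - x))
      rw [hdz, h1] at this
      linarith
  have key : ∀ t ∈ Set.Icc (0 : ℝ) 1, |sdist Ω (x + t • (z - x))| < δ₀ →
      ⟪Dd (x + t • (z - x)), z - x⟫_ℝ = - dist x z := by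
    intro t ht hlt
    have hl : HasDerivAt (fun t : ℝ => x + t • (z - x)) (z - x) t := by
      simpa using ((hasDerivAt_id t).smul_const (z - x)).const_add x
    have h1 : HasDerivAt (fun t : ℝ => sdist Ω (x + t • (z - x))) _ t :=
      HasFDerivAt.comp_hasDerivAt (l := sdist Ω) t (hDd _ hlt).hasFDerivAt hl
    have h2 : HasDerivAt (fun t : ℝ => (1 - t) * dist x z) (- dist x z) t := by
      simpa using ((hasDerivAt_id t).const_sub 1).mul_const (dist x z)
    have h3 := (h2.hasDerivWithinAt (s := Set.Icc 0 1)).congr hseg (hseg t ht)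
    have := (uniqueDiffOn_Icc zero_lt_one t ht).eq_deriv _ h1.hasDerivWithinAt h3
    simpa using this
  have uniq : ∀ q : EuclideanSpace ℝ (Fin n), ‖q‖ = 1 → ⟪q, z - x⟫_ℝ = - dist x z →
      dist x z • q = x - z := by
    intro q hq h
    have : ⟪q, x - z⟫_ℝ = ‖q‖ * ‖x - z‖ := by
      rw [← neg_sub z x, inner_neg_right, h, hq, neg_neg, dist_eq_norm, norm_sub_rev]
      simp
      rw [norm_sub_rev]
    rw [inner_eq_norm_mul_iff_real, hq, one_smul] at this
    rw [dist_eq_norm, this]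
  have k0 := key 0 (by simp) (by simpa using hxδ)
  have k1 := key 1 (by simp) (by simpa using hzδ)
  simp only [zero_smul, add_zero, one_smul, add_sub_cancel] at k0 k1
  have e := (uniq _ (hDdnorm x hxδ) k0).trans (uniq _ (hDdnorm z hzδ) k1).symm
  exact smul_right_injective _ (dist_pos.2 hxz).ne' e

theorem barrier_jet {n : ℕ} {Ω : Set (EuclideanSpace ℝ (Fin n))} (hΩo : IsOpen Ω)
    {d : EuclideanSpace ℝ (Fin n) → ℝ}
    {Dd : EuclideanSpace ℝ (Fin n) → EuclideanSpace ℝ (Fin n)}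
    {X : Matrix (Fin n) (Fin n) ℝ} {x : EuclideanSpace ℝ (Fin n)}
    (hd : ∀ᶠ y in nhds x, HasGradientAt d (Dd y) y)
    (hpos : ∀ y ∈ Ω, 0 < d y) (hx : x ∈ Ω)
    (hX : HasFDerivAt Dd (LinearMap.toContinuousLinearMap (Matrix.toEuclideanLin X)) x)
    (ε κ : ℝ) {u : EuclideanSpace ℝ (Fin n) → ℝ}
    (hmax : ∀ y ∈ Ω, u y - ε * d y ^ (-κ) ≤ u x - ε * d x ^ (-κ)) :
    ((ε * -κ * d x ^ (-κ - 1)) • Dd x, (ε * -κ * d x ^ (-κ - 1)) • X +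
          (ε * -κ * ((-κ - 1) * d x ^ (-κ - 1 - 1))) •
            Matrix.vecMulVec (fun i => Dd x i) (fun i => Dd x i)) ∈ J2plus Ω u x := by
  have hG : ∀ᶠ y in nhds x, HasGradientAt (fun y => ε * d y ^ (-κ))
      ((ε * -κ * d y ^ (-κ - 1)) • Dd y) y := by
    filter_upwards [hd, hΩo.mem_nhds hx] with y hy hyΩ
    have h := (barrier_grad (-κ) hy (hpos y hyΩ)).hasFDerivAt.const_mul ε
    rw [hasGradientAt_iff_hasFDerivAt]
    refine h.congr_fderiv ?_
    simp [smul_smul, mul_assoc]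
  have hH := barrier_hess (ε * -κ) (-κ - 1) hd.self_of_nhds (hpos x hx) hX
  refine ⟨jet_isSymm hG hH, fun η hη => ?_⟩
  have ht := jet_taylor hG hH η hη
  filter_upwards [ht.filter_mono nhdsWithin_le_nhds, self_mem_nhdsWithin] with y hy hyΩ
  have := hmax y hyΩ
  linarith

theorem sigmaT_sub_zero {n r : ℕ} (M N : Matrix (Fin n) (Fin r) ℝ)
    (v : EuclideanSpace ℝ (Fin n)) (h : sigmaT N v = 0) : sigmaT M v = sigmaT (M - N) v := by
  have : sigmaT (M - N) v = sigmaT M v - sigmaT N v := by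
    simp [sigmaT, Matrix.sub_mulVec]
  rw [this, h, sub_zero]

theorem statement_12
    {n m r : ℕ} (Ω : Set (EuclideanSpace ℝ (Fin n)))
    (hΩo : IsOpen Ω) (hΩconn : IsConnected Ω) (hΩbdd : Bornology.IsBounded Ω)
    (A : Set (Fin m → ℝ)) (hA : IsClosed A) (hAne : A.Nonempty)
    (b : EuclideanSpace ℝ (Fin n) → (Fin m → ℝ) → EuclideanSpace ℝ (Fin n))
    (σ : EuclideanSpace ℝ (Fin n) → (Fin m → ℝ) → Matrix (Fin n) (Fin r) ℝ)
    (hbBdd : ∃ C, ∀ x ∈ closure Ω, ∀ α ∈ A, ‖b x α‖ ≤ C)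
    (hσBdd : ∃ C, ∀ x ∈ closure Ω, ∀ α ∈ A, mnorm (σ x α) ≤ C)
    (hbCont : ContinuousOn (fun q : EuclideanSpace ℝ (Fin n) × (Fin m → ℝ) => b q.1 q.2)
      (closure Ω ×ˢ A))
    (hσCont : ContinuousOn (fun q : EuclideanSpace ℝ (Fin n) × (Fin m → ℝ) => σ q.1 q.2)
      (closure Ω ×ˢ A))
    (δ₀ : ℝ) (hδ₀ : 0 < δ₀)
    (Dd : EuclideanSpace ℝ (Fin n) → EuclideanSpace ℝ (Fin n))
    (D2d : EuclideanSpace ℝ (Fin n) → Matrix (Fin n) (Fin n) ℝ)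
    (hDd : ∀ x, |sdist Ω x| < δ₀ → HasGradientAt (sdist Ω) (Dd x) x)
    (hDdnorm : ∀ x, |sdist Ω x| < δ₀ → ‖Dd x‖ = 1)
    (hD2d : ∀ x, |sdist Ω x| < δ₀ →
      HasFDerivAt Dd (LinearMap.toContinuousLinearMap (Matrix.toEuclideanLin (D2d x))) x)
    (hD2dCont : ContinuousOn D2d {x | |sdist Ω x| < δ₀})
    (ω : ℝ → ℝ) (hω0 : ω 0 = 0) (hωcont : ContinuousAt ω 0) (hωnn : ∀ s, 0 ≤ ω s)
    (hreg22 : ∀ x ∈ closure Ω, ∀ y ∈ closure Ω, ∀ α ∈ A, ‖b x α - b y α‖ ≤ ω ‖x - y‖)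
    (β B : ℝ) (hβlow : 1 / 2 < β) (hβhigh : β ≤ 1) (hB : 0 < B)
    (hreg2 : ∀ x ∈ closure Ω, ∀ y ∈ closure Ω, ∀ α ∈ A,
      mnorm (σ x α - σ y α) ≤ B * ‖x - y‖ ^ β)
    (hirr : ∃ δ > (0 : ℝ), ∃ k > (0 : ℝ), ∃ γ : ℝ, γ < 2 * β - 1 ∧
      ∀ z ∈ frontier Ω, ∃ α₀ ∈ A, sigmaT (σ z α₀) (Dd z) = 0 ∧
        ∀ x ∈ Ω ∩ Metric.ball z δ,
          k * sdist Ω x ^ γ ≤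
            ⟪b x α₀, Dd x⟫_ℝ + Matrix.trace (σ x α₀ * (σ x α₀)ᵀ * D2d x))
    (hSMP : ∀ w : EuclideanSpace ℝ (Fin n) → ℝ, UpperSemicontinuousOn w Ω →
      (∀ x ∈ Ω, ∀ pX ∈ J2plus Ω w x, Fop A b σ x pX.1 pX.2 ≤ 0) →
      (∃ x₀ ∈ Ω, ∀ x ∈ Ω, w x ≤ w x₀) → ∀ x ∈ Ω, ∀ y ∈ Ω, w x = w y)
    (u : EuclideanSpace ℝ (Fin n) → ℝ) (hu : UpperSemicontinuousOn u Ω)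
    (husub : ∀ x ∈ Ω, ∀ pX ∈ J2plus Ω u x, Fop A b σ x pX.1 pX.2 ≤ 0)
    (κ : ℝ) (hκ : 0 < κ)
    (hgrowth : ∀ ε > (0 : ℝ), ∃ δ > (0 : ℝ),
      ∀ x ∈ Ω, sdist Ω x < δ → u x * sdist Ω x ^ κ ≤ ε) :
    ∀ x ∈ Ω, ∀ y ∈ Ω, u x = u y := by
  classical
  rcases Nat.eq_zero_or_pos n with rfl | hn
  · intro x _ y _
    rw [Subsingleton.elim x y]
  have : NeZero n := ⟨hn.ne'⟩
  have hne : (Ωᶜ).Nonempty := by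
    rw [Set.nonempty_compl]
    rintro rfl
    exact NormedSpace.unbounded_univ ℝ (EuclideanSpace ℝ (Fin n)) hΩbdd
  have hsd : ∀ x ∈ Ω, sdist Ω x = Metric.infDist x Ωᶜ := fun x hx =>
    sdist_of_mem (subset_closure hx)
  have hpos : ∀ x ∈ Ω, 0 < sdist Ω x := by
    intro x hx
    rw [hsd x hx]
    exact (hΩo.isClosed_compl.notMem_iff_infDist_pos hne).1 (by simpa using hx)
  have hcont : Continuous (sdist Ω) :=
    (Metric.continuous_infDist_pt _).sub (Metric.continuous_infDist_pt _)
  obtain ⟨δ, hδ, k, hk, γ, hγ, hirr⟩ := hirr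
  -- choice of the boundary layer
  obtain ⟨δ₁, hδ₁, hsmall⟩ : ∃ δ₁ > (0 : ℝ), ∀ t, 0 < t → t < δ₁ →
      (κ + 1) * B ^ 2 * t ^ (2 * β - 1 - γ) < k := by
    have he : 0 < 2 * β - 1 - γ := by linarith
    have hc : ContinuousAt (fun t : ℝ => (κ + 1) * B ^ 2 * t ^ (2 * β - 1 - γ)) 0 :=
      continuousAt_const.mul (Real.continuousAt_rpow_const _ _ (Or.inr he.le))
    have := Tendsto.eventually_lt_const (u := k) (by simpa [Real.zero_rpow he.ne'] using hk) hc
    obtain ⟨ρ, hρ, h⟩ := Metric.eventually_nhds_iff.1 this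
    exact ⟨ρ, hρ, fun t ht htρ => h (by simpa [abs_of_pos ht] using htρ)⟩
  set δ' := min δ₁ (min δ δ₀) with hδ'
  have hδ'pos : 0 < δ' := lt_min hδ₁ (lt_min hδ hδ₀)
  -- no interior maximum of `u - ε v` in the boundary layer
  have hno : ∀ ε > 0, ∀ x ∈ Ω, (∀ y ∈ Ω, u y - ε * sdist Ω y ^ (-κ) ≤
      u x - ε * sdist Ω x ^ (-κ)) → δ' ≤ sdist Ω x := by
    intro ε hε x hx hmax
    by_contra! hlt
    have hd0 := hpos x hx
    have hlt1 : sdist Ω x < δ₁ := hlt.trans_le (min_le_left _ _)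
    have hltδ : sdist Ω x < δ := hlt.trans_le ((min_le_right _ _).trans (min_le_left _ _))
    have hlt0 : |sdist Ω x| < δ₀ := by
      rw [abs_of_pos hd0]
      exact hlt.trans_le ((min_le_right _ _).trans (min_le_right _ _))
    obtain ⟨z, hz, hxz, hDz⟩ := exists_proj hΩo hne hδ₀ hDd hDdnorm hx hlt0
    obtain ⟨α, hα, hσz, hb⟩ := hirr z hz
    have hbx := hb x ⟨hx, by rw [Metric.mem_ball, hxz]; exact hltδ⟩
    have hev : ∀ᶠ y in nhds x, HasGradientAt (sdist Ω) (Dd y) y := by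
      filter_upwards [hcont.abs.continuousAt.eventually_lt_const hlt0] with y hy
      exact hDd y hy
    have hjet := barrier_jet hΩo hev hpos hx (hD2d x hlt0) ε κ hmax
    have hF := husub x hx _ hjet
    have hle := le_Fop (A := A) (b := b) (σ := σ) (x := x)
      (hbBdd.imp fun C hC => hC x (subset_closure hx))
      (hσBdd.imp fun C hC => hC x (subset_closure hx))
      ((ε * -κ * sdist Ω x ^ (-κ - 1)) • Dd x) ((ε * -κ * sdist Ω x ^ (-κ - 1)) • D2d x +
          (ε * -κ * ((-κ - 1) * sdist Ω x ^ (-κ - 1 - 1))) •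
            Matrix.vecMulVec (fun i => Dd x i) (fun i => Dd x i)) hα
    have hle0 := hle.trans hF
    rw [Matrix.mul_add, Matrix.trace_add, Matrix.mul_smul, Matrix.mul_smul, Matrix.trace_smul,
      Matrix.trace_smul, trace_vec, inner_smul_right, smul_eq_mul, smul_eq_mul] at hle0
    have hq : ∑ j, sigmaT (σ x α) (Dd x) j ^ 2 ≤ B ^ 2 * sdist Ω x ^ (2 * β) := by
      rw [sigmaT_sub_zero (σ x α) (σ z α) (Dd x) (by rw [hDz]; exact hσz)]
      refine (sigmaT_bound _ _).trans ?_
      rw [hDdnorm x hlt0, one_pow, mul_one]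
      have h1 := hreg2 x (subset_closure hx) z (frontier_subset_closure hz) α hα
      rw [← dist_eq_norm, hxz] at h1
      calc mnorm (σ x α - σ z α) ^ 2 ≤ (B * sdist Ω x ^ β) ^ 2 :=
            pow_le_pow_left₀ (Real.sqrt_nonneg _) h1 2
        _ = _ := by
            rw [mul_pow, ← Real.rpow_natCast (sdist Ω x ^ β), ← Real.rpow_mul hd0.le]
            norm_num [mul_comm]
    have hs := hsmall _ hd0 hlt1
    set t := sdist Ω x with ht
    set Q := ∑ j, sigmaT (σ x α) (Dd x) j ^ 2 with hQ
    set T := ⟪b x α, Dd x⟫_ℝ with hT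
    set R := Matrix.trace (σ x α * (σ x α)ᵀ * D2d x) with hR
    have e1 : t ^ (-κ - 1) = t * t ^ (-κ - 1 - 1) := by
      rw [Real.rpow_sub_one hd0.ne' (-κ - 1)]; field_simp
    have e2 : t * t ^ γ * t ^ (2 * β - 1 - γ) = t ^ (2 * β) := by
      nth_rewrite 1 [← Real.rpow_one t]
      rw [← Real.rpow_add hd0, ← Real.rpow_add hd0]; ring_nf
    have hP : 0 < t ^ (-κ - 1 - 1) := Real.rpow_pos_of_pos hd0 _
    have hg : 0 < t ^ γ := Real.rpow_pos_of_pos hd0 _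
    rw [e1] at hle0
    have f1 : 0 < ε * κ * t ^ (-κ - 1 - 1) := by positivity
    have f2 : (ε * κ * t ^ (-κ - 1 - 1)) * (t * (T + R) - (κ + 1) * Q) ≤ 0 := by
      refine le_of_eq_of_le ?_ hle0
      ring
    have f3 : 0 < t * (T + R) - (κ + 1) * Q := by
      have g1 : t * (k * t ^ γ) ≤ t * (T + R) := mul_le_mul_of_nonneg_left hbx hd0.le
      have g2 : (κ + 1) * Q ≤ (κ + 1) * (B ^ 2 * t ^ (2 * β)) :=
        mul_le_mul_of_nonneg_left hq (by linarith)
      have g3 : t * t ^ γ * ((κ + 1) * B ^ 2 * t ^ (2 * β - 1 - γ)) < t * t ^ γ * k :=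
        mul_lt_mul_of_pos_left hs (by positivity)
      have g4 : t * t ^ γ * ((κ + 1) * B ^ 2 * t ^ (2 * β - 1 - γ)) =
          (κ + 1) * (B ^ 2 * t ^ (2 * β)) := by rw [← e2]; ring
      linarith
    exact absurd f2 (not_le.2 (mul_pos f1 f3))
  -- compactness of inner sets
  have hKsub : ∀ s > 0, {x | s ≤ Metric.infDist x Ωᶜ} ⊆ Ω := by
    intro s hs x hx
    by_contra h
    rw [Set.mem_ofPred_eq, Metric.infDist_zero_of_mem (show x ∈ Ωᶜ from h)] at hx
    linarith
  have hK : ∀ s > 0, IsCompact {x | s ≤ Metric.infDist x Ωᶜ} := by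
    intro s hs
    exact Metric.isCompact_of_isClosed_isBounded
      (isClosed_le continuous_const (Metric.continuous_infDist_pt _)) (hΩbdd.subset (hKsub s hs))
  have hvcont : ContinuousOn (fun y => sdist Ω y ^ (-κ)) Ω := by
    intro y hy
    exact (hcont.continuousAt.rpow_const (Or.inl (hpos y hy).ne')).continuousWithinAt
  -- existence of maximum points of `u - ε v`
  have hex : ∀ ε > 0, ∃ x ∈ Ω, ∀ y ∈ Ω, u y - ε * sdist Ω y ^ (-κ) ≤
      u x - ε * sdist Ω x ^ (-κ) := by
    intro ε hε
    obtain ⟨x₀, hx₀⟩ := hΩconn.nonempty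
    set c := u x₀ - ε * sdist Ω x₀ ^ (-κ) with hc
    obtain ⟨η, hη, hgr⟩ := hgrowth (ε / 2) (by positivity)
    have hev := (tendsto_rpow_neg_nhdsGT_zero (y := -κ) (by linarith)).eventually_gt_atTop
      (-c / (ε / 2))
    obtain ⟨ρ, hρ, hbig⟩ := (mem_nhdsGT_iff_exists_Ioo_subset).1 hev
    set s := min (min η ρ) (sdist Ω x₀) with hs
    have hspos : 0 < s := lt_min (lt_min hη hρ) (hpos x₀ hx₀)
    have husc : UpperSemicontinuousOn (fun y => u y + -(ε * sdist Ω y ^ (-κ))) Ω :=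
      hu.add (((continuousOn_const.mul hvcont).neg).upperSemicontinuousOn)
    have hx₀K : x₀ ∈ {x | s ≤ Metric.infDist x Ωᶜ} := by
      rw [Set.mem_ofPred_eq, ← hsd x₀ hx₀]; exact min_le_right _ _
    obtain ⟨x, hxK, hxmax⟩ := (husc.mono (hKsub s hspos)).exists_isMaxOn ⟨x₀, hx₀K⟩ (hK s hspos)
    refine ⟨x, hKsub s hspos hxK, fun y hy => ?_⟩
    have hx0le := hxmax hx₀K
    simp only [Set.mem_ofPred_eq] at hx0le
    by_cases hyK : s ≤ Metric.infDist y Ωᶜ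
    · have := hxmax (show y ∈ {x | s ≤ Metric.infDist x Ωᶜ} from hyK)
      simp only [Set.mem_ofPred_eq] at this
      linarith
    · rw [← hsd y hy] at hyK
      push Not at hyK
      have hy0 := hpos y hy
      have g1 := hgr y hy (hyK.trans_le ((min_le_left _ _).trans (min_le_left _ _)))
      have g2 : -c / (ε / 2) < sdist Ω y ^ (-κ) :=
        hbig ⟨hy0, hyK.trans_le ((min_le_left _ _).trans (min_le_right _ _))⟩
      rw [div_lt_iff₀ (by positivity)] at g2
      have hvp : 0 < sdist Ω y ^ (-κ) := Real.rpow_pos_of_pos hy0 _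
      have g3 : u y ≤ ε / 2 * sdist Ω y ^ (-κ) := by
        rw [Real.rpow_neg hy0.le, ← div_eq_mul_inv, le_div_iff₀ (Real.rpow_pos_of_pos hy0 _)]
        exact g1
      linarith
  -- conclusion
  obtain ⟨x₁, hx₁, hx₁max⟩ := hex 1 one_pos
  have hx₁K : x₁ ∈ {x | δ' ≤ Metric.infDist x Ωᶜ} := by
    rw [Set.mem_ofPred_eq, ← hsd x₁ hx₁]; exact hno 1 one_pos x₁ hx₁ hx₁max
  obtain ⟨xm, hxmK, hxm⟩ := (hu.mono (hKsub δ' hδ'pos)).exists_isMaxOn ⟨x₁, hx₁K⟩ (hK δ' hδ'pos)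
  refine hSMP u hu husub ⟨xm, hKsub δ' hδ'pos hxmK, fun x hx => ?_⟩
  have hvp : 0 < sdist Ω x ^ (-κ) := Real.rpow_pos_of_pos (hpos x hx) _
  refine le_of_forall_pos_le_add fun θ hθ => ?_
  obtain ⟨y, hy, hymax⟩ := hex (θ / sdist Ω x ^ (-κ)) (by positivity)
  have hyd := hno _ (by positivity) y hy hymax
  have h1 := hymax x hx
  have h2 : u y ≤ u xm := hxm (show y ∈ {x | δ' ≤ Metric.infDist x Ωᶜ} by
    rw [Set.mem_ofPred_eq, ← hsd y hy]; exact hyd)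
  rw [div_mul_cancel₀ _ hvp.ne'] at h1
  have h3 : 0 < θ / sdist Ω x ^ (-κ) * sdist Ω y ^ (-κ) :=
    mul_pos (by positivity) (Real.rpow_pos_of_pos (hpos y hy) _)
  linarith
end
end
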